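/- arXiv:2206.10123 — 2 statements merged into one kernel-verified Lean document; each statement's English description precedes it below -/
import Mathlib

section
/- Let X and Y be finite nonempty alphabets, P_X a probability mass function on X with P_X(x) > 0 for all x, and W a channel with W(y|x) > 0 for all x, y and Σ_y W(y|x) = 1 for each x. Let U : X×Y → (0,∞) be a decoding metric and for θ ≥ 0 set U_θ(x|y) = U(x,y)^θ / Σ_{x'} U(x',y)^θ. Define E_r(R,U) = max_{ρ∈[0,1]} sup_{θ≥0} { −Σ_x P_X(x) log₂( Σ_y W(y|x) / U_θ(x|y)^ρ ) + ρ(H(P_X) − R) }. Suppose |X| = 2^m and fix a bijection φ : {0,1}^m → X, extended componentwise to a bijection Φ : {0,1}^{nm} → X^n. Fix r_fec ∈ (0,1] and set R = H(P_X) − m(1 − r_fec). Assume P_X has rational entries, and consider blocklengths n along which n·P_X(x) ∈ ℤ for all x; let T_n(P_X) ⊆ X^n be the type class of sequences with empirical distribution P_X, and let (k_n) be integers with k_n/(nm) → r_fec. For each such n, let G be uniformly distributed on the k_n×(nm) matrices over GF(2) and v uniformly distributed on {0,1}^{nm}, independent of G, and set c(w) = wG ⊕ v for w ∈ {0,1}^{k_n}.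 Fix any message w and any x_n ∈ T_n(P_X), and define the ensemble-average error probability P̄_e(n) = Σ_{y∈Y^n} ∏_i W(y_i | (x_n)_i) · Pr( ∃ w' ≠ w : ∏_i U( Φ(c(w'))_i , y_i ) ≥ ∏_i U( (x_n)_i , y_i ) | Φ(c(w)) = x_n ). Then lim_{n→∞} −(1/n) log₂ P̄_e(n) = E_r(R,U). -/
/-- Base-2 entropy of a probability mass function on a finite alphabet. -/
noncomputable def entropy2 {X : Type*} [Fintype X] (P : X → ℝ) : ℝ :=
  -∑ x, P x * Real.logb 2 (P x)

/-- The normalized metric `U_θ(x|y) = U(x,y)^θ / Σ_{x'} U(x',y)^θ`. -/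
noncomputable def Utheta {X Y : Type*} [Fintype X] (U : X → Y → ℝ) (θ : ℝ)
    (x : X) (y : Y) : ℝ :=
  U x y ^ θ / ∑ x', U x' y ^ θ

/-!
Given that `w` is encoded as `x`, the words of the other messages are uniform and pairwise
independent, so by the second moment method the conditional error probability given the output is,
up to a factor `2`, the union bound capped at `1`. This reduces the theorem to the exponential
growth of the capped union bound, a sum over the outputs involving only the number of competitors
of `x`.

For the upper bound, `min 1 t ≤ t ^ ρ`, and the number of competitors is at most the tilted sum
`∏ i, U_θ(x i|y i)⁻¹`. For the lower bound, the channel `W` is replaced by another channel `V`, at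
the price `D(V ‖ W | P)`, and competitors are produced by passing the output through a reverse
channel `Q` that does not decrease the expected metric; there are then about `2 ^ (n H(Q))` of them.
The two bounds meet because of the first-order conditions at the maximising `(ρ, θ)`: with
`V ∝ W / U_θ ^ ρ` and `Q = U_θ`, stationarity in `θ` says that `Q` does not decrease the metric and
stationarity in `ρ` that the cap at `1` is active exactly when it should be.
-/

section SecondMoment

open Finset

variable {ι α : Type*} [DecidableEq α] {s : Finset ι} {A : ι → Finset α}

theorem sq_sum_card_le_card_biUnion_mul (s : Finset ι) (A : ι → Finset α) :
    (∑ i ∈ s, #(A i)) ^ 2 ≤ #(s.biUnion A) * ∑ i ∈ s, ∑ j ∈ s, #(A i ∩ A j) := by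
  have hcard {B : Finset α} (hB : B ⊆ s.biUnion A) :
      ∑ a ∈ s.biUnion A, (if a ∈ B then 1 else 0) = #B := by
    rw [← card_filter, filter_mem_eq_inter, inter_eq_right.2 hB]
  have hsub {i : ι} (hi : i ∈ s) : A i ⊆ s.biUnion A := subset_biUnion_of_mem A hi
  calc (∑ i ∈ s, #(A i)) ^ 2
      = (∑ a ∈ s.biUnion A, ∑ i ∈ s, if a ∈ A i then 1 else 0) ^ 2 := by
        rw [sum_comm, sum_congr rfl fun i hi ↦ (hcard (hsub hi)).symm]
    _ ≤ #(s.biUnion A) * ∑ a ∈ s.biUnion A, (∑ i ∈ s, if a ∈ A i then 1 else 0) ^ 2 :=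
        sq_sum_le_card_mul_sum_sq
    _ = #(s.biUnion A) * ∑ i ∈ s, ∑ j ∈ s, #(A i ∩ A j) := by
        congr 1
        simp_rw [sq, sum_mul_sum, ite_zero_mul_ite_zero, mul_one, ← mem_inter]
        rw [sum_comm]
        refine sum_congr rfl fun i hi ↦ ?_
        rw [sum_comm]
        exact sum_congr rfl fun j _ ↦ hcard (inter_subset_left.trans (hsub hi))

variable [Fintype α] {p : ℝ}

theorem dens_biUnion_le_min (hA : ∀ i ∈ s, ((A i).dens : ℝ) = p) :
    ((s.biUnion A).dens : ℝ) ≤ min 1 (#s * p) := by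
  refine le_min (mod_cast dens_le_one) ?_
  calc ((s.biUnion A).dens : ℝ) ≤ ∑ i ∈ s, ((A i).dens : ℝ) := by
        rw [← NNRat.cast_sum, NNRat.cast_le]
        exact dens_biUnion_le
    _ = #s * p := by rw [sum_congr rfl hA, sum_const, nsmul_eq_mul]

theorem sq_sum_dens_le_dens_biUnion_mul (s : Finset ι) (A : ι → Finset α) :
    (∑ i ∈ s, ((A i).dens : ℝ)) ^ 2 ≤
      (s.biUnion A).dens * ∑ i ∈ s, ∑ j ∈ s, ((A i ∩ A j).dens : ℝ) := by
  have h : ((∑ i ∈ s, #(A i) : ℕ) : ℝ) ^ 2 ≤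
      #(s.biUnion A) * (∑ i ∈ s, ∑ j ∈ s, #(A i ∩ A j) : ℕ) := by
    exact_mod_cast sq_sum_card_le_card_biUnion_mul s A
  simp only [nnratCast_dens, ← sum_div, div_pow, div_mul_div_comm, ← sq]
  push_cast at h
  gcongr

/-- The second moment method: `p` and `p ^ 2` are the densities forced by pairwise independence. -/
theorem half_min_le_dens_biUnion (hA : ∀ i ∈ s, ((A i).dens : ℝ) = p)
    (hAA : ∀ i ∈ s, ∀ j ∈ s, i ≠ j → ((A i ∩ A j).dens : ℝ) = p ^ 2) :
    min 1 (#s * p) / 2 ≤ ((s.biUnion A).dens : ℝ) := by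
  classical
  set q : ℝ := #s * p with hq
  set D : ℝ := ((s.biUnion A).dens : ℝ)
  have hD : 0 ≤ D := by positivity
  have hsum : ∑ i ∈ s, ((A i).dens : ℝ) = q := by rw [sum_congr rfl hA, sum_const, nsmul_eq_mul]
  have hpairs : ∑ i ∈ s, ∑ j ∈ s, ((A i ∩ A j).dens : ℝ) ≤ q + q ^ 2 := by
    calc ∑ i ∈ s, ∑ j ∈ s, ((A i ∩ A j).dens : ℝ)
        ≤ ∑ i ∈ s, ∑ j ∈ s, ((if i = j then p else 0) + p ^ 2) := by
          refine sum_le_sum fun i hi ↦ sum_le_sum fun j hj ↦ ?_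
          split_ifs with hij
          · rw [← hij, inter_self, hA i hi]
            exact le_add_of_nonneg_right (sq_nonneg p)
          · rw [hAA i hi j hj hij, zero_add]
      _ = q + q ^ 2 := by
          simp only [sum_add_distrib, sum_ite_eq, sum_ite_mem, inter_self, sum_const, nsmul_eq_mul]
          ring
  have hmoment : q ^ 2 ≤ D * (q + q ^ 2) := by
    rw [← hsum] at hpairs ⊢
    exact (sq_sum_dens_le_dens_biUnion_mul s A).trans (by gcongr)
  have hq0 : 0 ≤ q := hsum ▸ sum_nonneg fun i _ ↦ NNRat.cast_nonneg _
  rcases hq0.eq_or_lt with h0 | hpos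
  · rw [← h0]
    simpa using hD
  · have hlin : q ≤ D * (1 + q) := le_of_mul_le_mul_left (by linarith) hpos
    rcases min_cases 1 q with ⟨h, _⟩ | ⟨h, _⟩ <;> rw [h] <;> nlinarith

end SecondMoment

section RandomMatrix

open Finset Matrix

theorem dens_filter_map_mem {G H : Type*} [AddGroup G] [AddMonoid H] [Fintype G] [Fintype H]
    [DecidableEq H] (f : G →+ H) (hf : Function.Surjective f) (S : Finset H) :
    ({g | f g ∈ S} : Finset G).dens = S.dens := by
  have hfiber (b : H) : #{g | f g = b} = #{g | f g = 0} :=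
    AddMonoidHom.card_fiber_eq_of_mem_range f (hf b) (hf 0)
  have hcard (T : Finset H) : #{g | f g ∈ T} = #T * #{g | f g = 0} := by
    rw [← sum_card_fiberwise_eq_card_filter, sum_congr rfl fun b _ ↦ hfiber b, sum_const,
      smul_eq_mul]
  have hG : Fintype.card G = Fintype.card H * #{g | f g = 0} := by simpa using hcard univ
  have hker : (#{g | f g = 0} : ℚ≥0) ≠ 0 := by
    have : 0 < Fintype.card G := Fintype.card_pos
    exact_mod_cast (Nat.pos_of_mul_pos_left (hG ▸ this)).ne'
  rw [dens, dens, hcard, hG, Nat.cast_mul, Nat.cast_mul, mul_div_mul_right _ _ hker]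

theorem dens_piFinset {ι : Type*} {α : ι → Type*} [Fintype ι] [DecidableEq ι]
    [∀ i, Fintype (α i)] (A : ∀ i, Finset (α i)) :
    (Fintype.piFinset A).dens = ∏ i, (A i).dens := by
  simp [dens, Fintype.card_piFinset, Fintype.card_pi, prod_div_distrib]

theorem exists_mul_eq_one_of_linearIndependent_row {F l m : Type*} [Field F] [Finite l]
    [DecidableEq l] [Fintype m] {M : Matrix l m F} (hM : LinearIndependent F M.row) :
    ∃ B : Matrix m l F, M * B = 1 := by
  have := Fintype.ofFinite l
  rw [← mulVec_surjective_iff_exists_right_inverse, ← coe_mulVecLin, ← LinearMap.range_eq_top]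
  refine Submodule.eq_top_of_finrank_eq ?_
  rw [Module.finrank_fintype_fun_eq_card]
  exact hM.rank_matrix

variable {F l m ι : Type*} [Field F] [Fintype F] [DecidableEq F] [Fintype l] [Fintype m]
  [DecidableEq m] [Fintype ι] [DecidableEq ι]

theorem dens_filter_forall_vecMul_mem {u : l → m → F} (hu : LinearIndependent F u)
    (A : l → Finset (ι → F)) :
    ({G | ∀ i, u i ᵥ* G ∈ A i} : Finset (Matrix m ι F)).dens = ∏ i, (A i).dens := by
  classical
  obtain ⟨B, hB⟩ := exists_mul_eq_one_of_linearIndependent_row (M := Matrix.of u) hu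
  let encode : Matrix m ι F →+ (l → ι → F) :=
    { toFun := fun G i ↦ u i ᵥ* G
      map_zero' := by ext; simp
      map_add' := fun G G' ↦ by ext; simp [vecMul_add] }
  have hsurj : Function.Surjective encode := by
    refine fun Z ↦ ⟨B * Matrix.of Z, funext fun i ↦ ?_⟩
    change (Matrix.of u) i ᵥ* _ = _
    rw [← mul_apply_eq_vecMul, ← Matrix.mul_assoc, hB, Matrix.one_mul]
    rfl
  rw [← dens_piFinset, ← dens_filter_map_mem encode hsurj]
  simp [encode]

theorem dens_filter_vecMul_mem {u : m → F} (hu : u ≠ 0) (S : Finset (ι → F)) :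
    ({G | u ᵥ* G ∈ S} : Finset (Matrix m ι F)).dens = S.dens := by
  have hrow : LinearIndependent F ![u] := LinearIndependent.of_subsingleton 0 hu
  simpa using dens_filter_forall_vecMul_mem hrow fun _ ↦ S

theorem dens_filter_vecMul_mem_and {u v : m → F} (huv : LinearIndependent F ![u, v])
    (S T : Finset (ι → F)) :
    ({G | u ᵥ* G ∈ S ∧ v ᵥ* G ∈ T} : Finset (Matrix m ι F)).dens = S.dens * T.dens := by
  simpa [Fin.forall_fin_two] using dens_filter_forall_vecMul_mem huv ![S, T]

theorem linearIndependent_pair_zmod_two {V : Type*} [AddCommGroup V] [Module (ZMod 2) V] {u v : V}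
    (hu : u ≠ 0) (hv : v ≠ 0) (huv : u ≠ v) : LinearIndependent (ZMod 2) ![u, v] := by
  rw [LinearIndependent.pair_iff' hu]
  have zero_or_one : ∀ a : ZMod 2, a = 0 ∨ a = 1 := by decide
  intro a
  rcases zero_or_one a with rfl | rfl
  · simpa using hv.symm
  · simpa using huv

variable (S : Finset (ι → ZMod 2))

theorem filter_exists_vecMul_mem_eq_biUnion :
    ({G | ∃ u ≠ 0, u ᵥ* G ∈ S} : Finset (Matrix m ι (ZMod 2))) =
      ({u | u ≠ 0} : Finset (m → ZMod 2)).biUnion fun u ↦ {G | u ᵥ* G ∈ S} := by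
  ext
  simp

theorem card_filter_ne_zero_zmod_two :
    (#{u : m → ZMod 2 | u ≠ 0} : ℝ) = 2 ^ Fintype.card m - 1 := by
  rw [filter_ne', card_erase_of_mem (mem_univ _), Nat.cast_sub (one_le_card.2 univ_nonempty)]
  simp

theorem dens_linearCode_meets_le :
    (({G | ∃ u ≠ 0, u ᵥ* G ∈ S} : Finset (Matrix m ι (ZMod 2))).dens : ℝ) ≤
      min 1 (((2 : ℝ) ^ Fintype.card m - 1) * S.dens) := by
  rw [filter_exists_vecMul_mem_eq_biUnion, ← card_filter_ne_zero_zmod_two]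
  refine dens_biUnion_le_min fun u hu ↦ ?_
  rw [dens_filter_vecMul_mem (by simpa using hu)]

theorem half_min_le_dens_linearCode_meets :
    min 1 (((2 : ℝ) ^ Fintype.card m - 1) * S.dens) / 2 ≤
      (({G | ∃ u ≠ 0, u ᵥ* G ∈ S} : Finset (Matrix m ι (ZMod 2))).dens : ℝ) := by
  rw [filter_exists_vecMul_mem_eq_biUnion, ← card_filter_ne_zero_zmod_two]
  refine half_min_le_dens_biUnion (fun u hu ↦ ?_) fun u hu v hv huv ↦ ?_
  · rw [dens_filter_vecMul_mem (by simpa using hu)]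
  · rw [← filter_and, dens_filter_vecMul_mem_and, NNRat.cast_mul, sq]
    exact linearIndependent_pair_zmod_two (by simpa using hu) (by simpa using hv) huv

end RandomMatrix

section AffineCode

open Finset Matrix

variable {m ι Z : Type*} [Fintype m]

/-- The conditional probability, given that the message `w` is encoded as `x`, that some other
message is encoded as an element satisfying `B`. The code is the random affine code
`w ↦ w ᵥ* G + v` with `(G, v)` uniform, whose binary words are read in `Z` through the
labelling `Φ`. -/
noncomputable def affineCodeHitProb (Φ : (ι → ZMod 2) ≃ Z) (w : m → ZMod 2) (x : Z)
    (B : Z → Prop) : ℝ :=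
  (Nat.card {ω : Matrix m ι (ZMod 2) × (ι → ZMod 2) //
      (∃ w', w' ≠ w ∧ B (Φ (w' ᵥ* ω.1 + ω.2))) ∧ Φ (w ᵥ* ω.1 + ω.2) = x} : ℝ) /
    (Nat.card {ω : Matrix m ι (ZMod 2) × (ι → ZMod 2) // Φ (w ᵥ* ω.1 + ω.2) = x} : ℝ)

variable (Φ : (ι → ZMod 2) ≃ Z) (w : m → ZMod 2) (x : Z) (B : Z → Prop)

/-- Once `w` is encoded as `x`, the matrix `G` determines `v` and is otherwise free. -/
def affineCodeEquiv :
    Matrix m ι (ZMod 2) ≃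
      {ω : Matrix m ι (ZMod 2) × (ι → ZMod 2) // Φ (w ᵥ* ω.1 + ω.2) = x} where
  toFun G := ⟨(G, Φ.symm x - w ᵥ* G), by simp⟩
  invFun ω := ω.1.1
  left_inv _ := rfl
  right_inv := by
    rintro ⟨⟨G, v⟩, hx⟩
    simp [← hx]

theorem vecMul_add_affineCodeEquiv (w' : m → ZMod 2) (G : Matrix m ι (ZMod 2)) :
    w' ᵥ* (affineCodeEquiv Φ w x G).1.1 + (affineCodeEquiv Φ w x G).1.2 =
      (w' - w) ᵥ* G + Φ.symm x := by
  simp only [affineCodeEquiv, Equiv.coe_fn_mk, sub_vecMul]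
  abel

theorem exists_affineCodeEquiv_iff (G : Matrix m ι (ZMod 2)) :
    (∃ w', w' ≠ w ∧ B (Φ (w' ᵥ* (affineCodeEquiv Φ w x G).1.1 + (affineCodeEquiv Φ w x G).1.2))) ↔
      ∃ u ≠ 0, B (Φ (u ᵥ* G + Φ.symm x)) := by
  simp only [vecMul_add_affineCodeEquiv]
  exact ⟨fun ⟨w', hne, hB⟩ ↦ ⟨w' - w, sub_ne_zero.2 hne, hB⟩,
    fun ⟨u, hne, hB⟩ ↦ ⟨u + w, by simpa using hne, by simpa using hB⟩⟩

variable [DecidablePred B]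

theorem affineCodeHitProb_eq_dens [DecidableEq m] [Fintype ι] [DecidableEq ι] :
    affineCodeHitProb Φ w x B =
      ({G | ∃ u ≠ 0, u ᵥ* G ∈ ({z | B (Φ (z + Φ.symm x))} : Finset (ι → ZMod 2))} :
        Finset (Matrix m ι (ZMod 2))).dens := by
  have hnum := Nat.card_congr <|
    ((affineCodeEquiv Φ w x).subtypeEquiv fun G ↦ (exists_affineCodeEquiv_iff Φ w x B G).symm).trans
      (Equiv.subtypeSubtypeEquivSubtypeInter _
        fun ω ↦ ∃ w', w' ≠ w ∧ B (Φ (w' ᵥ* ω.1 + ω.2)))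
  simp only [affineCodeHitProb, ← Nat.card_congr (affineCodeEquiv Φ w x), and_comm, ← hnum,
    nnratCast_dens, mem_filter_univ, Nat.card_eq_fintype_card, Fintype.card_subtype]

theorem dens_filter_labelling_add [Fintype ι] [DecidableEq ι] [Fintype Z] (b : ι → ZMod 2) :
    ({z | B (Φ (z + b))} : Finset (ι → ZMod 2)).dens = ({z | B z} : Finset Z).dens := by
  rw [← dens_map_equiv ((Equiv.addRight b).trans Φ)]
  congr 1
  ext z
  rw [mem_map_equiv]
  simp

theorem affineCodeHitProb_le [Finite ι] [Fintype Z] :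
    affineCodeHitProb Φ w x B ≤
      min 1 (((2 : ℝ) ^ Fintype.card m - 1) * ({z | B z} : Finset Z).dens) := by
  classical
  have := Fintype.ofFinite ι
  rw [affineCodeHitProb_eq_dens, ← dens_filter_labelling_add Φ B (Φ.symm x)]
  exact dens_linearCode_meets_le _

theorem half_min_le_affineCodeHitProb [Finite ι] [Fintype Z] :
    min 1 (((2 : ℝ) ^ Fintype.card m - 1) * ({z | B z} : Finset Z).dens) / 2 ≤
      affineCodeHitProb Φ w x B := by
  classical
  have := Fintype.ofFinite ι
  rw [affineCodeHitProb_eq_dens, ← dens_filter_labelling_add Φ B (Φ.symm x)]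
  exact half_min_le_dens_linearCode_meets _

end AffineCode

section Tilting

open Finset

variable {Z : Type*} [Fintype Z] {w : Z → ℝ}

/-- The log-partition function `log ∑ w e^g`, in nats, of the energy `g` with reference
weights `w`. -/
noncomputable def logPartition (w g : Z → ℝ) : ℝ :=
  Real.log (∑ z, w z * Real.exp (g z))

/-- The Gibbs distribution proportional to `w e^g`. -/
noncomputable def tilt (w g : Z → ℝ) (z : Z) : ℝ :=
  w z * Real.exp (g z) / ∑ z', w z' * Real.exp (g z')

theorem logPartition_zero (hw1 : ∑ z, w z = 1) : logPartition w (fun _ ↦ 0) = 0 := by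
  simp [logPartition, hw1]

theorem tilt_zero (hw1 : ∑ z, w z = 1) : tilt w (fun _ ↦ 0) = w := by
  ext z
  simp [tilt, hw1]

theorem sum_mul_le_logPartition (hw : ∀ z, 0 ≤ w z) (hw1 : ∑ z, w z = 1) (g : Z → ℝ) :
    ∑ z, w z * g z ≤ logPartition w g := by
  have hJensen : Real.exp (∑ z, w z * g z) ≤ ∑ z, w z * Real.exp (g z) :=
    convexOn_exp.map_sum_le (fun z _ ↦ hw z) hw1 fun z _ ↦ Set.mem_univ (g z)
  exact (Real.le_log_iff_exp_le ((Real.exp_pos _).trans_le hJensen)).2 hJensen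

variable [Nonempty Z] (hw : ∀ z, 0 < w z)
include hw

theorem sum_mul_exp_pos (g : Z → ℝ) : 0 < ∑ z, w z * Real.exp (g z) :=
  sum_pos (fun z _ ↦ mul_pos (hw z) (Real.exp_pos _)) univ_nonempty

theorem exp_logPartition (g : Z → ℝ) :
    Real.exp (logPartition w g) = ∑ z, w z * Real.exp (g z) :=
  Real.exp_log (sum_mul_exp_pos hw g)

theorem log_add_le_logPartition (g : Z → ℝ) (z : Z) :
    Real.log (w z) + g z ≤ logPartition w g := by
  rw [logPartition, Real.le_log_iff_exp_le (sum_mul_exp_pos hw g), Real.exp_add,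
    Real.exp_log (hw z)]
  exact single_le_sum (f := fun z ↦ w z * Real.exp (g z))
    (fun z _ ↦ mul_nonneg (hw z).le (Real.exp_pos _).le) (mem_univ z)

theorem tilt_pos (g : Z → ℝ) (z : Z) : 0 < tilt w g z :=
  div_pos (mul_pos (hw z) (Real.exp_pos _)) (sum_mul_exp_pos hw g)

theorem sum_tilt (g : Z → ℝ) : ∑ z, tilt w g z = 1 := by
  simp only [tilt, ← sum_div]
  exact div_self (sum_mul_exp_pos hw g).ne'

theorem log_tilt_div (g : Z → ℝ) (z : Z) :
    Real.log (tilt w g z / w z) = g z - logPartition w g := by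
  rw [tilt, mul_div_assoc, mul_div_cancel_left₀ _ (hw z).ne',
    Real.log_div (Real.exp_pos _).ne' (sum_mul_exp_pos hw g).ne', Real.log_exp, logPartition]

theorem continuous_logPartition {T : Type*} [TopologicalSpace T] {g : T → Z → ℝ}
    (hg : ∀ z, Continuous fun t ↦ g t z) : Continuous fun t ↦ logPartition w (g t) :=
  Continuous.log (by fun_prop) fun t ↦ (sum_mul_exp_pos hw (g t)).ne'

theorem hasDerivAt_logPartition {g : ℝ → Z → ℝ} {g' : Z → ℝ} {t : ℝ}
    (hg : ∀ z, HasDerivAt (fun t ↦ g t z) (g' z) t) :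
    HasDerivAt (fun t ↦ logPartition w (g t)) (∑ z, tilt w (g t) z * g' z) t := by
  have h := (HasDerivAt.fun_sum (u := univ) fun z _ ↦ ((hg z).exp.const_mul (w z))).log
    (sum_mul_exp_pos hw (g t)).ne'
  refine h.congr_deriv ?_
  rw [sum_div]
  refine sum_congr rfl fun z _ ↦ ?_
  rw [tilt]
  ring

end Tilting

section Types

open Finset Filter Topology

variable {X Z : Type*} [Fintype X] [Fintype Z]

/-- The expectation `∑ₐ P(a) ∑_z κ(z|a) g(a, z)` of `g` over the input and output of the
channel `κ` with input distribution `P`. -/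
def channelMean (P : X → ℝ) (κ g : X → Z → ℝ) : ℝ :=
  ∑ a, P a * ∑ z, κ a z * g a z

theorem channelMean_add (P : X → ℝ) (κ g g' : X → Z → ℝ) :
    channelMean P κ (fun a z ↦ g a z + g' a z) = channelMean P κ g + channelMean P κ g' := by
  simp only [channelMean, mul_add, sum_add_distrib]

theorem channelMean_const_mul (P : X → ℝ) (κ g : X → Z → ℝ) (c : ℝ) :
    channelMean P κ (fun a z ↦ c * g a z) = c * channelMean P κ g := by
  simp only [channelMean, mul_left_comm _ c, ← mul_sum]

theorem channelMean_of_input (P : X → ℝ) {κ : X → Z → ℝ} (hκ1 : ∀ a, ∑ z, κ a z = 1) (g : X → ℝ) :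
    channelMean P κ (fun a _ ↦ g a) = ∑ a, P a * g a := by
  simp only [channelMean, ← sum_mul, hκ1, one_mul]

theorem channelMean_const {P : X → ℝ} (hP1 : ∑ a, P a = 1) {κ : X → Z → ℝ}
    (hκ1 : ∀ a, ∑ z, κ a z = 1) (c : ℝ) : channelMean P κ (fun _ _ ↦ c) = c := by
  rw [channelMean_of_input P hκ1, ← sum_mul, hP1, one_mul]

theorem mul_le_channelMean {P : X → ℝ} (hP : ∀ a, 0 ≤ P a) {κ : X → Z → ℝ}
    (hκ : ∀ a z, 0 ≤ κ a z) {g : X → Z → ℝ} (hg : ∀ a z, 0 ≤ g a z) (a : X) (z : Z) :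
    P a * (κ a z * g a z) ≤ channelMean P κ g := by
  have hz (a : X) (z : Z) : 0 ≤ κ a z * g a z := mul_nonneg (hκ a z) (hg a z)
  calc P a * (κ a z * g a z) ≤ P a * ∑ z, κ a z * g a z :=
        mul_le_mul_of_nonneg_left (single_le_sum (fun z _ ↦ hz a z) (mem_univ z)) (hP a)
    _ ≤ channelMean P κ g :=
        single_le_sum (f := fun a ↦ P a * ∑ z, κ a z * g a z)
          (fun a _ ↦ mul_nonneg (hP a) (sum_nonneg fun z _ ↦ hz a z)) (mem_univ a)

theorem sum_pi_prod {ι R : Type*} [Fintype ι] [DecidableEq ι] [CommSemiring R] (f : ι → Z → R) :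
    ∑ z : ι → Z, ∏ i, f i (z i) = ∏ i, ∑ a, f i a := by
  rw [prod_univ_sum, Fintype.piFinset_univ]

theorem sum_pi_prod_eq_one {ι R : Type*} [Fintype ι] [DecidableEq ι] [CommSemiring R]
    {f : ι → Z → R} (hf : ∀ i, ∑ a, f i a = 1) : ∑ z : ι → Z, ∏ i, f i (z i) = 1 := by
  rw [sum_pi_prod, prod_congr rfl fun i _ ↦ hf i, prod_const_one]

variable {P : X → ℝ} {κ : X → Z → ℝ} [Nonempty Z]

theorem exists_pos_sum_logPartition_neg (hκ : ∀ a z, 0 < κ a z) (hκ1 : ∀ a, ∑ z, κ a z = 1)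
    {h : X → Z → ℝ} (hmean : channelMean P κ h < 0) :
    ∃ s > 0, ∑ a, P a * logPartition (κ a) (fun z ↦ s * h a z) < 0 := by
  set Λ : ℝ → ℝ := fun s ↦ ∑ a, P a * logPartition (κ a) (fun z ↦ s * h a z)
  have hΛ0 : Λ 0 = 0 := by simp [Λ, logPartition_zero, hκ1]
  have hderiv : HasDerivAt Λ (channelMean P κ h) 0 := by
    have hlog (a : X) : HasDerivAt (fun s ↦ logPartition (κ a) fun z ↦ s * h a z)
        (∑ z, κ a z * h a z) 0 := by
      simpa [tilt_zero, hκ1] using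
        hasDerivAt_logPartition (hκ a) fun z ↦ hasDerivAt_mul_const (h a z) (x := 0)
    exact HasDerivAt.fun_sum fun a _ ↦ (hlog a).const_mul (P a)
  obtain ⟨s, hslope, hs⟩ :=
    ((hderiv.tendsto_slope_zero_right.eventually_lt_const hmean).and self_mem_nhdsWithin).exists
  refine ⟨s, hs, ?_⟩
  rw [zero_add, hΛ0, sub_zero, smul_eq_mul] at hslope
  exact neg_of_mul_neg_right hslope (inv_nonneg.2 (le_of_lt hs))

variable [DecidableEq X] {n : ℕ} {x : Fin n → X}

/-- Membership in the type class `T_n(P)`. -/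
def HasType (P : X → ℝ) {n : ℕ} (x : Fin n → X) : Prop :=
  ∀ a, (#{i | x i = a} : ℝ) = n * P a

theorem HasType.sum_apply (hx : HasType P x) (g : X → ℝ) :
    ∑ i, g (x i) = n * ∑ a, P a * g a := by
  rw [← sum_fiberwise univ x, mul_sum]
  refine sum_congr rfl fun a _ ↦ ?_
  rw [← mul_assoc, ← hx a, ← nsmul_eq_mul, ← sum_const]
  exact sum_congr rfl fun i hi ↦ by rw [(mem_filter.mp hi).2]

theorem HasType.sum_prod_mul_exp (hx : HasType P x) (hκ : ∀ a z, 0 < κ a z) (g : X → Z → ℝ) :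
    ∑ z : Fin n → Z, (∏ i, κ (x i) (z i)) * Real.exp (∑ i, g (x i) (z i)) =
      Real.exp (n * ∑ a, P a * logPartition (κ a) (g a)) := by
  simp only [Real.exp_sum, ← prod_mul_distrib]
  rw [sum_pi_prod fun i z ↦ κ (x i) z * Real.exp (g (x i) z), ← hx.sum_apply, Real.exp_sum]
  exact prod_congr rfl fun i _ ↦ (exp_logPartition (hκ _) _).symm

theorem exists_prob_sum_pos_le_pow (hκ : ∀ a z, 0 < κ a z) (hκ1 : ∀ a, ∑ z, κ a z = 1)
    {h : X → Z → ℝ} (hh : (∀ a z, h a z ≤ 0) ∨ channelMean P κ h < 0) :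
    ∃ r : ℝ, 0 ≤ r ∧ r < 1 ∧ ∀ (n : ℕ) (x : Fin n → X), HasType P x →
      ∑ z : Fin n → Z with 0 < ∑ i, h (x i) (z i), ∏ i, κ (x i) (z i) ≤ r ^ n := by
  rcases hh with hh | hmean
  · refine ⟨0, le_rfl, one_pos, fun n x _ ↦ ?_⟩
    rw [filter_false_of_mem fun z _ ↦ (sum_nonpos fun i _ ↦ hh _ _).not_gt, sum_empty]
    exact pow_nonneg le_rfl n
  obtain ⟨s, hs, hneg⟩ := exists_pos_sum_logPartition_neg hκ hκ1 hmean
  refine ⟨_, (Real.exp_pos _).le, Real.exp_lt_one_iff.2 hneg, fun n x hx ↦ ?_⟩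
  have hprod (z : Fin n → Z) : 0 ≤ ∏ i, κ (x i) (z i) := prod_nonneg fun i _ ↦ (hκ _ _).le
  rw [← Real.exp_nat_mul, ← hx.sum_prod_mul_exp hκ, sum_filter]
  refine sum_le_sum fun z _ ↦ ?_
  split_ifs with hz
  · refine le_mul_of_one_le_right (hprod z) (Real.one_le_exp ?_)
    rw [← mul_sum]
    positivity
  · exact mul_nonneg (hprod z) (Real.exp_pos _).le

theorem sum_filter_not_forall_nonpos_le {α J : Type*} [Fintype J] (s : Finset α)
    {f : α → ℝ} (hf : ∀ a ∈ s, 0 ≤ f a) (g : J → α → ℝ) :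
    ∑ a ∈ s with ¬ ∀ j, g j a ≤ 0, f a ≤ ∑ j, ∑ a ∈ s with 0 < g j a, f a := by
  simp only [sum_filter]
  rw [sum_comm]
  refine sum_le_sum fun a ha ↦ ?_
  have hterm (j : J) : 0 ≤ if 0 < g j a then f a else 0 := ite_nonneg (hf a ha) le_rfl
  split_ifs with hall
  · exact sum_nonneg fun j _ ↦ hterm j
  · obtain ⟨j, hj⟩ := not_forall.1 hall
    calc f a = if 0 < g j a then f a else 0 := (if_pos (not_le.1 hj)).symm
      _ ≤ ∑ j, if 0 < g j a then f a else 0 :=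
          single_le_sum (f := fun j ↦ if 0 < g j a then f a else 0) (fun j _ ↦ hterm j) (mem_univ j)

theorem eventually_half_le_prob_forall_sum_nonpos {J : Type*} [Fintype J]
    (hκ : ∀ a z, 0 < κ a z) (hκ1 : ∀ a, ∑ z, κ a z = 1) {h : J → X → Z → ℝ}
    (hh : ∀ j, (∀ a z, h j a z ≤ 0) ∨ channelMean P κ (h j) < 0) :
    ∀ᶠ n in atTop, ∀ x : Fin n → X, HasType P x →
      1 / 2 ≤ ∑ z : Fin n → Z with ∀ j, ∑ i, h j (x i) (z i) ≤ 0, ∏ i, κ (x i) (z i) := by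
  choose r hr0 hr1 hr using fun j ↦ exists_prob_sum_pos_le_pow hκ hκ1 (hh j)
  have hlim : Tendsto (fun n : ℕ ↦ ∑ j, r j ^ n) atTop (𝓝 0) := by
    simpa using tendsto_finsetSum univ fun j _ ↦
      tendsto_pow_atTop_nhds_zero_of_lt_one (hr0 j) (hr1 j)
  filter_upwards [hlim.eventually_lt_const one_half_pos] with n hn x hx
  have hbad : ∑ z : Fin n → Z with ¬ ∀ j, ∑ i, h j (x i) (z i) ≤ 0, ∏ i, κ (x i) (z i) ≤
      ∑ j, r j ^ n :=
    (sum_filter_not_forall_nonpos_le univ (fun z _ ↦ prod_nonneg fun i _ ↦ (hκ _ _).le) _).trans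
      (sum_le_sum fun j _ ↦ hr j n x hx)
  have htotal : ∑ z : Fin n → Z, ∏ i, κ (x i) (z i) = 1 := sum_pi_prod_eq_one fun i ↦ hκ1 (x i)
  rw [← sum_filter_add_sum_filter_not univ fun z : Fin n → Z ↦ ∀ j, ∑ i, h j (x i) (z i) ≤ 0]
    at htotal
  linarith

end Types

section UnionBound

open Finset Filter Topology

variable {X Y : Type*} [Fintype X]

/-- The set of words whose metric with the output `y` is at least that of the transmitted
word `x`. Metrics are additive, so `u` is the logarithm of the paper's `U`. -/
noncomputable def competitors (u : X → Y → ℝ) {n : ℕ} (x : Fin n → X) (y : Fin n → Y) :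
    Finset (Fin n → X) :=
  {x' | ∑ i, u (x i) (y i) ≤ ∑ i, u (x' i) (y i)}

/-- The random coding union bound: the error probability when, given the output `y`, each
competitor contributes `K` and the total is capped at `1`. -/
noncomputable def rcuBound [Fintype Y] (W u : X → Y → ℝ) (K : ℝ) {n : ℕ} (x : Fin n → X) : ℝ :=
  ∑ y : Fin n → Y, (∏ i, W (x i) (y i)) * min 1 (K * #(competitors u x y))

/-- The decoding loss `-log U_θ(a|y)` of the normalized metric `U_θ ∝ e^{θu}`, in nats. -/
noncomputable def metricLoss (u : X → Y → ℝ) (θ : ℝ) (a : X) (y : Y) : ℝ :=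
  logPartition (fun _ ↦ 1) (fun x' ↦ θ * u x' y) - θ * u a y

/-- Gallager's function `-∑ₐ P(a) log ∑_y W(y|a) U_θ(a|y)^{-ρ} + ρ c`, in nats, to be maximised
over `ρ` and `θ`. -/
noncomputable def gallagerExponent [Fintype Y] (P : X → ℝ) (W u : X → Y → ℝ) (c ρ θ : ℝ) : ℝ :=
  ρ * c - ∑ a, P a * logPartition (W a) (fun y ↦ ρ * metricLoss u θ a y)

section Achievability

variable [Nonempty X] (u : X → Y → ℝ) {θ : ℝ} {n : ℕ}

theorem card_competitors_le (hθ : 0 ≤ θ) (x : Fin n → X) (y : Fin n → Y) :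
    (#(competitors u x y) : ℝ) ≤ Real.exp (∑ i, metricLoss u θ (x i) (y i)) := by
  calc (#(competitors u x y) : ℝ)
      ≤ ∑ x' ∈ competitors u x y, ∏ i, Real.exp (θ * u (x' i) (y i) - θ * u (x i) (y i)) := by
        rw [← nsmul_one]
        refine card_nsmul_le_sum _ _ _ fun x' hx' ↦ ?_
        rw [← Real.exp_sum, Real.one_le_exp_iff, sum_sub_distrib, ← mul_sum, ← mul_sum,
          ← mul_sub]
        exact mul_nonneg hθ (sub_nonneg.2 (mem_filter.1 hx').2)
    _ ≤ ∑ x' : Fin n → X, ∏ i, Real.exp (θ * u (x' i) (y i) - θ * u (x i) (y i)) :=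
        sum_le_univ_sum_of_nonneg fun x' ↦ prod_nonneg fun i _ ↦ (Real.exp_pos _).le
    _ = Real.exp (∑ i, metricLoss u θ (x i) (y i)) := by
        rw [sum_pi_prod fun i x' ↦ Real.exp (θ * u x' (y i) - θ * u (x i) (y i)), Real.exp_sum]
        refine prod_congr rfl fun i _ ↦ ?_
        rw [metricLoss, Real.exp_sub, exp_logPartition fun _ ↦ one_pos]
        simp only [Real.exp_sub, sum_div, one_mul]

theorem min_one_le_rpow {t ρ : ℝ} (ht : 0 ≤ t) (hρ : ρ ∈ Set.Icc (0 : ℝ) 1) :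
    min 1 t ≤ t ^ ρ := by
  rcases le_total 1 t with h | h
  · exact (min_le_left _ _).trans (Real.one_le_rpow h hρ.1)
  · exact (min_le_right _ _).trans (Real.self_le_rpow_of_le_one ht h hρ.2)

theorem rcuBound_le [Fintype Y] [Nonempty Y] [DecidableEq X] {P : X → ℝ} {W : X → Y → ℝ}
    (hW : ∀ a y, 0 < W a y) {ρ : ℝ} (hρ : ρ ∈ Set.Icc (0 : ℝ) 1) (hθ : 0 ≤ θ) (c : ℝ)
    {x : Fin n → X} (hx : HasType P x) :
    rcuBound W u (Real.exp (-(n * c))) x ≤ Real.exp (-(n * gallagerExponent P W u c ρ θ)) := by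
  have hmin (y : Fin n → Y) : min 1 (Real.exp (-(n * c)) * #(competitors u x y)) ≤
      Real.exp (-(n * c) * ρ) * Real.exp (∑ i, ρ * metricLoss u θ (x i) (y i)) := by
    refine (min_one_le_rpow (by positivity) hρ).trans ?_
    rw [← mul_sum, mul_comm ρ, Real.exp_mul, Real.exp_mul,
      ← Real.mul_rpow (Real.exp_pos _).le (Real.exp_pos _).le]
    have := hρ.1
    gcongr
    exact card_competitors_le u hθ x y
  calc rcuBound W u (Real.exp (-(n * c))) x
      ≤ ∑ y : Fin n → Y, (∏ i, W (x i) (y i)) *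
          (Real.exp (-(n * c) * ρ) * Real.exp (∑ i, ρ * metricLoss u θ (x i) (y i))) := by
        refine sum_le_sum fun y _ ↦ mul_le_mul_of_nonneg_left (hmin y) ?_
        exact prod_nonneg fun i _ ↦ (hW _ _).le
    _ = Real.exp (-(n * gallagerExponent P W u c ρ θ)) := by
        simp only [mul_left_comm _ (Real.exp (-(n * c) * ρ))]
        rw [← mul_sum, hx.sum_prod_mul_exp hW fun a y ↦ ρ * metricLoss u θ a y, ← Real.exp_add,
          gallagerExponent]
        ring_nf

end Achievability

section Converse

theorem channelMean_compProd [Fintype Y] (P : X → ℝ) (V : X → Y → ℝ) (Q : Y → X → ℝ)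
    (g : X → Y → X → ℝ) :
    channelMean P (fun a z ↦ V a z.1 * Q z.1 z.2) (fun a (z : Y × X) ↦ g a z.1 z.2) =
      channelMean P V (fun a y ↦ ∑ x', Q y x' * g a y x') := by
  simp only [channelMean, Fintype.sum_prod_type, mul_assoc, ← mul_sum]

/-- The conditional divergence `D(V ‖ W | P)`, in nats. -/
noncomputable def condDivergence [Fintype Y] (P : X → ℝ) (V W : X → Y → ℝ) : ℝ :=
  channelMean P V fun a y ↦ Real.log (V a y / W a y)

/-- The expected metric gain when the input is replaced by one drawn from the output through the
reverse channel `Q`. -/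
noncomputable def scoreGain [Fintype Y] (P : X → ℝ) (V u : X → Y → ℝ) (Q : Y → X → ℝ) : ℝ :=
  channelMean P V fun a y ↦ ∑ x', Q y x' * (u x' y - u a y)

/-- The entropy of the reverse channel `Q` given the output of the channel `V`, in nats. -/
noncomputable def equivocation [Fintype Y] (P : X → ℝ) (V : X → Y → ℝ) (Q : Y → X → ℝ) : ℝ :=
  channelMean P V fun _ y ↦ ∑ x', Real.negMulLog (Q y x')

theorem prod_mul_exp_neg_le {X Y : Type*} {W V : X → Y → ℝ} {d : ℝ} {n : ℕ}
    (hW : ∀ a y, 0 < W a y) (hV : ∀ a y, 0 < V a y) {x : Fin n → X} {y : Fin n → Y}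
    (hxy : ∑ i, (Real.log (V (x i) (y i) / W (x i) (y i)) + -d) ≤ 0) :
    (∏ i, V (x i) (y i)) * Real.exp (-(n * d)) ≤ ∏ i, W (x i) (y i) := by
  have hfactor (i : Fin n) :
      V (x i) (y i) = W (x i) (y i) * Real.exp (Real.log (V (x i) (y i) / W (x i) (y i))) := by
    rw [Real.exp_log (div_pos (hV _ _) (hW _ _)), mul_div_cancel₀ _ (hW _ _).ne']
  have hexp : (∏ i, V (x i) (y i)) * Real.exp (-(n * d)) = (∏ i, W (x i) (y i)) *
      Real.exp (∑ i, (Real.log (V (x i) (y i) / W (x i) (y i)) + -d)) := by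
    rw [prod_congr rfl fun i _ ↦ hfactor i, prod_mul_distrib, ← Real.exp_sum, mul_assoc,
      ← Real.exp_add]
    simp [sum_add_distrib]
  rw [hexp]
  exact mul_le_of_le_one_right (prod_nonneg fun i _ ↦ (hW _ _).le) (Real.exp_le_one_iff.2 hxy)

variable {P : X → ℝ} {W V u : X → Y → ℝ} {Q : Y → X → ℝ} {d h : ℝ} {n : ℕ}

/-- The three per-letter quantities which must have nonpositive sum for `x'` to be typical with
`(x, y)`: how far `x'` is from being a competitor of `x`, how far `Q(x'|y)` is above `e^{-nh}`, and
how far the likelihood ratio of `V` to `W` at `(x, y)` is above `e^{nd}`. -/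
noncomputable def typicalityExcess (W V u : X → Y → ℝ) (Q : Y → X → ℝ) (d h : ℝ) :
    Fin 3 → X → Y × X → ℝ :=
  ![fun a z ↦ u a z.1 - u z.2 z.1, fun _ z ↦ h + Real.log (Q z.1 z.2),
    fun a z ↦ Real.log (V a z.1 / W a z.1) + -d]

/-- The set of words that are jointly typical with `(x, y)` and are competitors of `x`. -/
noncomputable def typicalCompetitors (W V u : X → Y → ℝ) (Q : Y → X → ℝ) (d h : ℝ)
    (x : Fin n → X) (y : Fin n → Y) : Finset (Fin n → X) :=
  {x' | ∀ j, ∑ i, typicalityExcess W V u Q d h j (x i) (y i, x' i) ≤ 0}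

theorem typicalCompetitors_subset (x : Fin n → X) (y : Fin n → Y) :
    typicalCompetitors W V u Q d h x y ⊆ competitors u x y := by
  intro x' hx'
  have hcomp : ∑ i, (u (x i) (y i) - u (x' i) (y i)) ≤ 0 := (mem_filter.1 hx').2 0
  rw [sum_sub_distrib, sub_nonpos] at hcomp
  exact mem_filter.2 ⟨mem_univ _, hcomp⟩

theorem typicalityExcess_nonpos_or_channelMean_neg [Fintype Y] (hP1 : ∑ a, P a = 1)
    (hV1 : ∀ a, ∑ y, V a y = 1) (hQ1 : ∀ y, ∑ a, Q y a = 1)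
    (hu : (∀ a a' y, u a y ≤ u a' y) ∨ 0 < scoreGain P V u Q)
    (hd : condDivergence P V W < d)
    (hh : h < equivocation P V Q) (j : Fin 3) :
    (∀ a z, typicalityExcess W V u Q d h j a z ≤ 0) ∨
      channelMean P (fun a z ↦ V a z.1 * Q z.1 z.2) (typicalityExcess W V u Q d h j) < 0 := by
  set κ : X → Y × X → ℝ := fun a z ↦ V a z.1 * Q z.1 z.2 with hκ
  have hκ1 (a : X) : ∑ z, κ a z = 1 := by
    simp [κ, Fintype.sum_prod_type, ← mul_sum, hQ1, hV1]
  match j with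
  | ⟨0, _⟩ =>
    have hmean : channelMean P κ (fun a z ↦ u a z.1 - u z.2 z.1) =
        -scoreGain P V u Q := by
      rw [hκ, scoreGain, channelMean_compProd P V Q fun a y x' ↦ u a y - u x' y, ← neg_one_mul,
        ← channelMean_const_mul]
      simp [← sum_neg_distrib, ← mul_neg]
    exact hu.imp (fun hu a z ↦ sub_nonpos.2 (hu _ _ _))
      fun hu ↦ hmean.trans_lt (neg_lt_zero.2 hu)
  | ⟨1, _⟩ =>
    have hmean : channelMean P κ (fun _ z ↦ h + Real.log (Q z.1 z.2)) =
        h - equivocation P V Q := by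
      rw [equivocation, channelMean_add, channelMean_const hP1 hκ1, sub_eq_add_neg, ← neg_one_mul,
        ← channelMean_const_mul, hκ, channelMean_compProd P V Q fun _ y x' ↦ Real.log (Q y x')]
      simp [Real.negMulLog]
    exact .inr (hmean.trans_lt (sub_neg.2 hh))
  | ⟨2, _⟩ =>
    have hmean : channelMean P κ (fun a z ↦ Real.log (V a z.1 / W a z.1) + -d) =
        condDivergence P V W - d := by
      rw [condDivergence, channelMean_add, channelMean_const hP1 hκ1, ← sub_eq_add_neg,
        hκ, channelMean_compProd P V Q fun a y _ ↦ Real.log (V a y / W a y)]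
      simp [← sum_mul, hQ1]
    exact .inr (hmean.trans_lt (sub_neg.2 hd))

theorem eventually_half_le_sum_typicalCompetitors [Fintype Y] [Nonempty Y] [Nonempty X]
    [DecidableEq X] (hP1 : ∑ a, P a = 1)
    (hV : ∀ a y, 0 < V a y) (hV1 : ∀ a, ∑ y, V a y = 1)
    (hQ : ∀ y a, 0 < Q y a) (hQ1 : ∀ y, ∑ a, Q y a = 1)
    (hu : (∀ a a' y, u a y ≤ u a' y) ∨ 0 < scoreGain P V u Q)
    (hd : condDivergence P V W < d)
    (hh : h < equivocation P V Q) :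
    ∀ᶠ n in atTop, ∀ x : Fin n → X, HasType P x →
      1 / 2 ≤ ∑ y : Fin n → Y, (∏ i, V (x i) (y i)) *
        ∑ x' ∈ typicalCompetitors W V u Q d h x y, ∏ i, Q (y i) (x' i) := by
  have hprob (a : X) : ∑ z : Y × X, V a z.1 * Q z.1 z.2 = 1 := by
    simp [Fintype.sum_prod_type, ← mul_sum, hQ1, hV1]
  have hpos (a : X) (z : Y × X) : 0 < V a z.1 * Q z.1 z.2 := mul_pos (hV _ _) (hQ _ _)
  filter_upwards [eventually_half_le_prob_forall_sum_nonpos hpos hprob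
    (typicalityExcess_nonpos_or_channelMean_neg hP1 hV1 hQ1 hu hd hh)] with n hn x hx
  refine (hn x hx).trans_eq ?_
  rw [sum_filter, ← (Equiv.arrowProdEquivProdArrow (Fin n) (fun _ ↦ Y) fun _ ↦ X).symm.sum_comp,
    Fintype.sum_prod_type]
  refine sum_congr rfl fun y _ ↦ ?_
  rw [typicalCompetitors, sum_filter, mul_sum]
  refine sum_congr rfl fun x' _ ↦ ?_
  simp [prod_mul_distrib]

theorem exp_mul_sum_typicalCompetitors_le (hQ : ∀ y a, 0 < Q y a) (x : Fin n → X) (y : Fin n → Y) :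
    Real.exp (n * h) * ∑ x' ∈ typicalCompetitors W V u Q d h x y, ∏ i, Q (y i) (x' i) ≤
      #(competitors u x y) := by
  calc Real.exp (n * h) * ∑ x' ∈ typicalCompetitors W V u Q d h x y, ∏ i, Q (y i) (x' i)
      = ∑ x' ∈ typicalCompetitors W V u Q d h x y,
          Real.exp (∑ i, (h + Real.log (Q (y i) (x' i)))) := by
        simp [mul_sum, sum_add_distrib, Real.exp_add, Real.exp_sum, Real.exp_log (hQ _ _)]
    _ ≤ #(typicalCompetitors W V u Q d h x y) := by
        rw [← nsmul_one]
        exact sum_le_card_nsmul _ _ _ fun x' hx' ↦ Real.exp_le_one_iff.2 ((mem_filter.1 hx').2 1)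
    _ ≤ #(competitors u x y) := by
        exact_mod_cast card_le_card (typicalCompetitors_subset x y)

theorem sum_typicalCompetitors_mul_le (hW : ∀ a y, 0 < W a y) (hV : ∀ a y, 0 < V a y)
    (hQ : ∀ y a, 0 < Q y a) (hQ1 : ∀ y, ∑ a, Q y a = 1) {K : ℝ} (hK : 0 ≤ K)
    (x : Fin n → X) (y : Fin n → Y) :
    ((∏ i, V (x i) (y i)) * ∑ x' ∈ typicalCompetitors W V u Q d h x y, ∏ i, Q (y i) (x' i)) *
        (Real.exp (-(n * d)) * min 1 (K * Real.exp (n * h))) ≤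
      (∏ i, W (x i) (y i)) * min 1 (K * #(competitors u x y)) := by
  set q := ∑ x' ∈ typicalCompetitors W V u Q d h x y, ∏ i, Q (y i) (x' i)
  have hprodW : 0 ≤ ∏ i, W (x i) (y i) := prod_nonneg fun i _ ↦ (hW _ _).le
  have hmin : 0 ≤ min 1 (K * Real.exp (n * h)) := by positivity
  have hprodQ (x' : Fin n → X) : 0 ≤ ∏ i, Q (y i) (x' i) := prod_nonneg fun i _ ↦ (hQ _ _).le
  have hq0 : 0 ≤ q := sum_nonneg fun x' _ ↦ hprodQ x'
  have hq1 : q ≤ 1 :=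
    (sum_le_univ_sum_of_nonneg hprodQ).trans_eq (sum_pi_prod_eq_one fun i ↦ hQ1 (y i))
  rcases (typicalCompetitors W V u Q d h x y).eq_empty_or_nonempty with hempty | ⟨x', hx'⟩
  · simp only [q, hempty, sum_empty, mul_zero, zero_mul]
    positivity
  have hq : q * min 1 (K * Real.exp (n * h)) ≤ min 1 (K * #(competitors u x y)) := by
    refine le_min (mul_le_one₀ hq1 hmin (min_le_left _ _)) ?_
    calc q * min 1 (K * Real.exp (n * h)) ≤ q * (K * Real.exp (n * h)) := by
          gcongr
          exact min_le_right _ _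
      _ = K * (Real.exp (n * h) * q) := by ring
      _ ≤ K * #(competitors u x y) := by
          gcongr
          exact exp_mul_sum_typicalCompetitors_le hQ x y
  calc (∏ i, V (x i) (y i)) * q * (Real.exp (-(n * d)) * min 1 (K * Real.exp (n * h)))
      = (∏ i, V (x i) (y i)) * Real.exp (-(n * d)) * (q * min 1 (K * Real.exp (n * h))) := by ring
    _ ≤ (∏ i, W (x i) (y i)) * min 1 (K * #(competitors u x y)) :=
        mul_le_mul (prod_mul_exp_neg_le hW hV ((mem_filter.1 hx').2 2)) hq (by positivity) hprodW

theorem eventually_half_exp_mul_min_le_rcuBound [Fintype Y] [Nonempty Y] [Nonempty X]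
    [DecidableEq X] (hP1 : ∑ a, P a = 1)
    (hW : ∀ a y, 0 < W a y) (hV : ∀ a y, 0 < V a y) (hV1 : ∀ a, ∑ y, V a y = 1)
    (hQ : ∀ y a, 0 < Q y a) (hQ1 : ∀ y, ∑ a, Q y a = 1)
    (hu : (∀ a a' y, u a y ≤ u a' y) ∨ 0 < scoreGain P V u Q)
    (hd : condDivergence P V W < d)
    (hh : h < equivocation P V Q) :
    ∀ᶠ n in atTop, ∀ x : Fin n → X, HasType P x → ∀ K ≥ 0,
      Real.exp (-(n * d)) * min 1 (K * Real.exp (n * h)) / 2 ≤ rcuBound W u K x := by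
  filter_upwards [eventually_half_le_sum_typicalCompetitors hP1 hV hV1 hQ hQ1 hu hd hh]
    with n hn x hx K hK
  rw [div_eq_inv_mul, ← one_div]
  refine (mul_le_mul_of_nonneg_right (hn x hx) (by positivity)).trans ?_
  rw [sum_mul]
  exact sum_le_sum fun y _ ↦ sum_typicalCompetitors_mul_le hW hV hQ hQ1 hK x y

end Converse

end UnionBound

section FirstOrder

theorem deriv_mul_sub_nonpos_of_isMaxOn {f : ℝ → ℝ} {f' a b : ℝ} {s : Set ℝ} (hs : Convex ℝ s)
    (hmax : IsMaxOn f s a) (hf : HasDerivAt f f' a) (ha : a ∈ s) (hb : b ∈ s) :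
    f' * (b - a) ≤ 0 := by
  have h := hmax.localize.hasFDerivWithinAt_nonpos hf.hasFDerivAt.hasFDerivWithinAt
    (sub_mem_posTangentConeAt_of_segment_subset (hs.segment_subset ha hb))
  simpa [mul_comm] using h

theorem deriv_nonpos_and_mul_eq_zero_of_isMaxOn_Ici {f : ℝ → ℝ} {f' a : ℝ}
    (hmax : IsMaxOn f (Set.Ici 0) a) (hf : HasDerivAt f f' a) (ha : 0 ≤ a) :
    f' ≤ 0 ∧ a * f' = 0 := by
  have h (b : ℝ) (hb : 0 ≤ b) : f' * (b - a) ≤ 0 :=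
    deriv_mul_sub_nonpos_of_isMaxOn (convex_Ici 0) hmax hf ha hb
  have hright : f' ≤ 0 := by simpa using h (a + 1) (by positivity)
  refine ⟨hright, ?_⟩
  have hleft := h 0 le_rfl
  nlinarith [mul_nonpos_of_nonneg_of_nonpos ha hright]

theorem max_zero_deriv_eq_mul_of_isMaxOn_Icc {f : ℝ → ℝ} {f' a : ℝ}
    (hmax : IsMaxOn f (Set.Icc 0 1) a) (hf : HasDerivAt f f' a) (ha : a ∈ Set.Icc (0 : ℝ) 1) :
    max 0 f' = a * f' := by
  have h (b : ℝ) (hb : b ∈ Set.Icc (0 : ℝ) 1) : f' * (b - a) ≤ 0 :=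
    deriv_mul_sub_nonpos_of_isMaxOn (convex_Icc 0 1) hmax hf ha hb
  have hleft := h 0 (by simp)
  have hright := h 1 (by simp)
  obtain ⟨ha0, ha1⟩ := ha
  rcases le_total 0 f' with hf' | hf'
  · rw [max_eq_right hf']
    nlinarith
  · rw [max_eq_left hf']
    nlinarith

end FirstOrder

section Exponent

open Finset Filter Topology

variable {X Y : Type*} [Fintype X]

/-- The normalized metric `U_θ(x'|y)` as a reverse channel from outputs to inputs. -/
noncomputable def posterior (u : X → Y → ℝ) (θ : ℝ) (y : Y) : X → ℝ :=
  tilt (fun _ ↦ 1) fun x' ↦ θ * u x' y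

/-- The tilted channel `∝ W(y|a) U_θ(a|y)^{-ρ}`, the dominant channel behaviour in error
events. -/
noncomputable def tiltedChannel [Fintype Y] (W u : X → Y → ℝ) (ρ θ : ℝ) (a : X) : Y → ℝ :=
  tilt (W a) fun y ↦ ρ * metricLoss u θ a y

theorem metricLoss_eq_add (u : X → Y → ℝ) (θ : ℝ) (a a' : X) (y : Y) :
    metricLoss u θ a y = metricLoss u θ a' y + θ * (u a' y - u a y) := by
  rw [metricLoss, metricLoss]
  ring

section

variable [Fintype Y] (u : X → Y → ℝ) {P : X → ℝ} {W : X → Y → ℝ}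

theorem gallagerExponent_le (hP : ∀ a, 0 ≤ P a) (hW : ∀ a y, 0 ≤ W a y)
    (hW1 : ∀ a, ∑ y, W a y = 1) (c ρ θ : ℝ) :
    gallagerExponent P W u c ρ θ ≤ ρ * (c - channelMean P W (metricLoss u θ)) := by
  rw [gallagerExponent, mul_sub, ← channelMean_const_mul]
  unfold channelMean
  gcongr with a
  · exact hP a
  · exact sum_mul_le_logPartition (hW a) (hW1 a) _

theorem gallagerExponent_zero_left (hW1 : ∀ a, ∑ y, W a y = 1) (c θ : ℝ) :
    gallagerExponent P W u c 0 θ = 0 := by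
  simp [gallagerExponent, logPartition_zero, hW1]

theorem tiltedChannel_zero_left (hW1 : ∀ a, ∑ y, W a y = 1) (θ : ℝ) :
    tiltedChannel W u 0 θ = W := by
  ext a y
  simp [tiltedChannel, tilt_zero, hW1]

theorem hasDerivAt_gallagerExponent_left [Nonempty Y] (hW : ∀ a y, 0 < W a y)
    (P : X → ℝ) (c ρ θ : ℝ) :
    HasDerivAt (fun ρ ↦ gallagerExponent P W u c ρ θ)
      (c - channelMean P (tiltedChannel W u ρ θ) (metricLoss u θ)) ρ :=
  (hasDerivAt_mul_const c).sub <| HasDerivAt.fun_sum fun a _ ↦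
    (hasDerivAt_logPartition (hW a) fun _ ↦ hasDerivAt_mul_const _).const_mul (P a)

theorem condDivergence_tiltedChannel [Nonempty Y] (hW : ∀ a y, 0 < W a y)
    (P : X → ℝ) (ρ θ : ℝ) :
    condDivergence P (tiltedChannel W u ρ θ) W =
      ρ * channelMean P (tiltedChannel W u ρ θ) (metricLoss u θ) -
        ∑ a, P a * logPartition (W a) (fun y ↦ ρ * metricLoss u θ a y) := by
  have htilt (a : X) : ∑ y, tiltedChannel W u ρ θ a y = 1 := sum_tilt (hW a) _
  rw [← channelMean_of_input P htilt, ← channelMean_const_mul, eq_sub_iff_add_eq, condDivergence,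
    ← channelMean_add]
  congr 1
  ext a y
  rw [tiltedChannel, log_tilt_div (hW a), sub_add_cancel]

end

variable [Nonempty X] (u : X → Y → ℝ)

theorem mul_sub_le_metricLoss (θ : ℝ) (a a' : X) (y : Y) :
    θ * (u a' y - u a y) ≤ metricLoss u θ a y := by
  have h := log_add_le_logPartition (w := fun _ ↦ 1) (fun _ ↦ one_pos) (fun x' ↦ θ * u x' y) a'
  rw [Real.log_one, zero_add] at h
  rw [metricLoss, mul_sub]
  gcongr

theorem metricLoss_nonneg (θ : ℝ) (a : X) (y : Y) : 0 ≤ metricLoss u θ a y := by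
  simpa using mul_sub_le_metricLoss u θ a a y

theorem posterior_pos (θ : ℝ) (y : Y) (x' : X) : 0 < posterior u θ y x' :=
  tilt_pos (fun _ ↦ one_pos) _ x'

theorem sum_posterior (θ : ℝ) (y : Y) : ∑ x', posterior u θ y x' = 1 :=
  sum_tilt (fun _ ↦ one_pos) _

theorem log_posterior (θ : ℝ) (y : Y) (x' : X) :
    Real.log (posterior u θ y x') = -metricLoss u θ x' y := by
  have h := log_tilt_div (w := fun _ ↦ 1) (fun _ ↦ one_pos) (fun x' ↦ θ * u x' y) x'
  rw [div_one] at h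
  rw [posterior, h, metricLoss, neg_sub]

theorem continuous_metricLoss (a : X) (y : Y) : Continuous fun θ ↦ metricLoss u θ a y :=
  (continuous_logPartition (fun _ ↦ one_pos) fun x' ↦ by fun_prop).sub (by fun_prop)

theorem hasDerivAt_metricLoss (θ : ℝ) (a : X) (y : Y) :
    HasDerivAt (fun θ ↦ metricLoss u θ a y) (∑ x', posterior u θ y x' * (u x' y - u a y)) θ := by
  have h := (hasDerivAt_logPartition (w := fun _ ↦ 1) (fun _ ↦ one_pos)
    fun x' ↦ hasDerivAt_mul_const (u x' y) (x := θ)).sub (hasDerivAt_mul_const (u a y) (x := θ))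
  refine h.congr_deriv ?_
  simp only [mul_sub, sum_sub_distrib, ← sum_mul, sum_posterior, one_mul]
  rfl

variable [Fintype Y] {P : X → ℝ} {W : X → Y → ℝ}

theorem equivocation_posterior {V : X → Y → ℝ} (θ : ℝ) :
    equivocation P V (posterior u θ) =
      channelMean P V (metricLoss u θ) - θ * scoreGain P V u (posterior u θ) := by
  rw [eq_sub_iff_add_eq, equivocation, scoreGain, ← channelMean_const_mul, ← channelMean_add]
  congr 1
  ext a y
  rw [mul_sum, ← sum_add_distrib]
  calc ∑ x', (Real.negMulLog (posterior u θ y x') +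
          θ * (posterior u θ y x' * (u x' y - u a y)))
      = ∑ x', posterior u θ y x' * metricLoss u θ a y := by
        refine sum_congr rfl fun x' _ ↦ ?_
        rw [Real.negMulLog, log_posterior, metricLoss_eq_add u θ a x' y]
        ring
    _ = metricLoss u θ a y := by rw [← sum_mul, sum_posterior, one_mul]

theorem hasDerivAt_channelMean_metricLoss (P : X → ℝ) (V : X → Y → ℝ) (θ : ℝ) :
    HasDerivAt (fun θ ↦ channelMean P V (metricLoss u θ)) (scoreGain P V u (posterior u θ)) θ :=
  HasDerivAt.fun_sum fun a _ ↦ (HasDerivAt.fun_sum fun y _ ↦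
    (hasDerivAt_metricLoss u θ a y).const_mul (V a y)).const_mul (P a)

theorem exists_pos_forall_mul_le_channelMean_metricLoss (hP : ∀ a, 0 < P a)
    (hW : ∀ a y, 0 < W a y) {a a' : X} {y : Y} (hu : u a y < u a' y) :
    ∃ s > 0, ∀ θ ≥ 0, s * θ ≤ channelMean P W (metricLoss u θ) := by
  have hgap : 0 < u a' y - u a y := sub_pos.2 hu
  refine ⟨P a * (W a y * (u a' y - u a y)), mul_pos (hP a) (mul_pos (hW a y) hgap),
    fun θ _ ↦ ?_⟩
  calc P a * (W a y * (u a' y - u a y)) * θ = P a * (W a y * (θ * (u a' y - u a y))) := by ring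
    _ ≤ P a * (W a y * metricLoss u θ a y) := by
        have := (hP a).le
        have := (hW a y).le
        gcongr
        exact mul_sub_le_metricLoss u θ a a' y
    _ ≤ channelMean P W (metricLoss u θ) :=
        mul_le_channelMean (fun a ↦ (hP a).le) (fun a y ↦ (hW a y).le)
          (metricLoss_nonneg u θ) a y

theorem exists_isMinOn_channelMean_metricLoss (hP : ∀ a, 0 < P a)
    (hW : ∀ a y, 0 < W a y) {a a' : X} {y : Y}
    (hu : u a y < u a' y) :
    ∃ θ ∈ Set.Ici (0 : ℝ), IsMinOn (fun θ ↦ channelMean P W (metricLoss u θ)) (Set.Ici 0) θ := by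
  obtain ⟨s, hs, hloss⟩ := exists_pos_forall_mul_le_channelMean_metricLoss u hP hW hu
  have hcont : Continuous fun θ ↦ channelMean P W (metricLoss u θ) :=
    continuous_iff_continuousAt.2 fun θ ↦
      (hasDerivAt_channelMean_metricLoss u P W θ).continuousAt
  have hcompact : IsCompact (Set.Icc 0 (channelMean P W (metricLoss u 0) / s)) := isCompact_Icc
  refine hcont.continuousOn.exists_isMinOn' isClosed_Ici Set.self_mem_Ici ?_
  filter_upwards [Filter.mem_inf_of_left hcompact.compl_mem_cocompact,
    Filter.mem_inf_of_right (Filter.mem_principal_self _)] with θ hθ hθ'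
  have hlarge : channelMean P W (metricLoss u 0) < s * θ := by
    rw [← div_lt_iff₀' hs]
    exact not_le.1 fun hle ↦ hθ ⟨hθ', hle⟩
  exact hlarge.le.trans (hloss θ hθ')

variable [Nonempty Y] (hW : ∀ a y, 0 < W a y)
include hW

theorem continuous_gallagerExponent (P : X → ℝ) (c : ℝ) :
    Continuous fun z : ℝ × ℝ ↦ gallagerExponent P W u c z.1 z.2 := by
  refine .sub (by fun_prop) (continuous_finsetSum _ fun a _ ↦ .mul (by fun_prop) ?_)
  exact continuous_logPartition (hW a) fun y ↦
    continuous_fst.mul ((continuous_metricLoss u a y).comp continuous_snd)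

theorem hasDerivAt_gallagerExponent_right (P : X → ℝ) (c ρ θ : ℝ) :
    HasDerivAt (fun θ ↦ gallagerExponent P W u c ρ θ)
      (-(ρ * scoreGain P (tiltedChannel W u ρ θ) u (posterior u θ))) θ := by
  have h := HasDerivAt.const_sub (ρ * c) <| HasDerivAt.fun_sum (u := univ) fun a _ ↦
    (hasDerivAt_logPartition (hW a) fun y ↦
      (hasDerivAt_metricLoss u θ a y).const_mul ρ).const_mul (P a)
  refine h.congr_deriv ?_
  rw [scoreGain, ← channelMean_const_mul]
  rfl

theorem exists_isMaxOn_gallagerExponent (hP : ∀ a, 0 < P a) (hW1 : ∀ a, ∑ y, W a y = 1)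
    {a a' : X} {y : Y} (hu : u a y < u a' y) {c : ℝ} {z₀ : ℝ × ℝ}
    (hz₀ : z₀ ∈ Set.Icc (0 : ℝ) 1 ×ˢ Set.Ici (0 : ℝ))
    (hpos : 0 < gallagerExponent P W u c z₀.1 z₀.2) :
    ∃ z ∈ Set.Icc (0 : ℝ) 1 ×ˢ Set.Ici (0 : ℝ),
      IsMaxOn (fun z : ℝ × ℝ ↦ gallagerExponent P W u c z.1 z.2)
        (Set.Icc (0 : ℝ) 1 ×ˢ Set.Ici (0 : ℝ)) z := by
  obtain ⟨s, hs, hloss⟩ := exists_pos_forall_mul_le_channelMean_metricLoss u hP hW hu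
  refine (continuous_gallagerExponent u hW P c).continuousOn.exists_isMaxOn'
    (isClosed_Icc.prod isClosed_Ici) hz₀ ?_
  have hcompact : IsCompact (Set.Icc (0 : ℝ) 1 ×ˢ Set.Icc (0 : ℝ) (c / s)) :=
    isCompact_Icc.prod isCompact_Icc
  filter_upwards [Filter.mem_inf_of_left hcompact.compl_mem_cocompact,
    Filter.mem_inf_of_right (Filter.mem_principal_self _)] with z hz hz'
  have hlarge : c < s * z.2 := by
    rw [← div_lt_iff₀' hs]
    exact not_le.1 fun hle ↦ hz ⟨hz'.1, hz'.2, hle⟩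
  calc gallagerExponent P W u c z.1 z.2 ≤ z.1 * (c - channelMean P W (metricLoss u z.2)) :=
        gallagerExponent_le u (fun a ↦ (hP a).le) (fun a y ↦ (hW a y).le) hW1 c z.1 z.2
    _ ≤ 0 := mul_nonpos_of_nonneg_of_nonpos hz'.1.1 (by linarith [hloss z.2 hz'.2])
    _ ≤ gallagerExponent P W u c z₀.1 z₀.2 := hpos.le

theorem exists_gallagerExponent_stationary_of_pos (hP : ∀ a, 0 < P a)
    (hW1 : ∀ a, ∑ y, W a y = 1) {a a' : X} {y : Y} (hu : u a y < u a' y) {c : ℝ} {z₀ : ℝ × ℝ}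
    (hz₀ : z₀ ∈ Set.Icc (0 : ℝ) 1 ×ˢ Set.Ici (0 : ℝ))
    (hpos : 0 < gallagerExponent P W u c z₀.1 z₀.2) :
    ∃ ρ ∈ Set.Icc (0 : ℝ) 1, ∃ θ ≥ 0,
      IsMaxOn (fun ρ ↦ gallagerExponent P W u c ρ θ) (Set.Icc 0 1) ρ ∧
      0 ≤ scoreGain P (tiltedChannel W u ρ θ) u (posterior u θ) ∧
      θ * scoreGain P (tiltedChannel W u ρ θ) u (posterior u θ) = 0 := by
  obtain ⟨⟨ρ, θ⟩, ⟨hρ, hθ⟩, hmax⟩ := exists_isMaxOn_gallagerExponent u hW hP hW1 hu hz₀ hpos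
  have hρ0 : 0 < ρ := hρ.1.lt_of_ne' fun h ↦ by
    subst h
    simpa [gallagerExponent_zero_left u hW1] using hpos.trans_le (hmax hz₀)
  obtain ⟨hderiv, hslack⟩ := deriv_nonpos_and_mul_eq_zero_of_isMaxOn_Ici
    (fun θ' hθ' ↦ hmax (show (ρ, θ') ∈ _ from ⟨hρ, hθ'⟩))
    (hasDerivAt_gallagerExponent_right u hW P c ρ θ) hθ
  refine ⟨ρ, hρ, θ, hθ, fun ρ' hρ' ↦ hmax (show (ρ', θ) ∈ _ from ⟨hρ', hθ⟩), ?_, ?_⟩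
  · exact nonneg_of_mul_nonneg_right (neg_nonpos.1 hderiv) hρ0
  · simpa [hρ0.ne'] using hslack

/-- When the exponent is nowhere positive, `ρ = 0` makes it independent of `θ`, and `θ` is chosen
to minimise the mean metric loss instead. -/
theorem exists_gallagerExponent_stationary (hP : ∀ a, 0 < P a) (hW1 : ∀ a, ∑ y, W a y = 1)
    (c : ℝ) :
    ∃ ρ ∈ Set.Icc (0 : ℝ) 1, ∃ θ ≥ 0,
      IsMaxOn (fun ρ ↦ gallagerExponent P W u c ρ θ) (Set.Icc 0 1) ρ ∧
      0 ≤ scoreGain P (tiltedChannel W u ρ θ) u (posterior u θ) ∧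
      θ * scoreGain P (tiltedChannel W u ρ θ) u (posterior u θ) = 0 := by
  by_cases hu : ∀ a a' y, u a' y ≤ u a y
  · have hgain (V : X → Y → ℝ) (Q : Y → X → ℝ) : scoreGain P V u Q = 0 := by
      have heq (a a' : X) (y : Y) : u a' y - u a y = 0 :=
        sub_eq_zero.2 ((hu a a' y).antisymm (hu a' a y))
      simp [scoreGain, channelMean, heq]
    obtain ⟨ρ, hρ, hmax⟩ := isCompact_Icc.exists_isMaxOn (Set.nonempty_Icc.2 zero_le_one)
      ((continuous_gallagerExponent u hW P c).comp (.prodMk_left 0)).continuousOn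
    exact ⟨ρ, hρ, 0, le_rfl, hmax, by simp [hgain]⟩
  push Not at hu
  obtain ⟨a, a', y, hu⟩ := hu
  by_cases! hpos : ∃ z ∈ Set.Icc (0 : ℝ) 1 ×ˢ Set.Ici (0 : ℝ), 0 < gallagerExponent P W u c z.1 z.2
  · obtain ⟨z₀, hz₀, hpos⟩ := hpos
    exact exists_gallagerExponent_stationary_of_pos u hW hP hW1 hu hz₀ hpos
  · obtain ⟨θ, hθ, hmin⟩ := exists_isMinOn_channelMean_metricLoss u hP hW hu
    obtain ⟨hderiv, hslack⟩ := deriv_nonpos_and_mul_eq_zero_of_isMaxOn_Ici hmin.neg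
      (hasDerivAt_channelMean_metricLoss u P W θ).neg hθ
    refine ⟨0, Set.left_mem_Icc.2 zero_le_one, θ, hθ, fun ρ' hρ' ↦ ?_, ?_⟩
    · simpa [gallagerExponent_zero_left u hW1] using hpos (ρ', θ) ⟨hρ', hθ⟩
    · rw [tiltedChannel_zero_left u hW1]
      exact ⟨neg_nonpos.1 hderiv, by simpa using hslack⟩

end Exponent

section OptimalExponent

open Finset Filter Topology

variable {X Y : Type*} [Fintype X] [Fintype Y]

/-- The random coding exponent `max_ρ sup_θ gallagerExponent`, in nats. -/
noncomputable def optimalExponent (P : X → ℝ) (W u : X → Y → ℝ) (c : ℝ) : ℝ :=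
  ⨆ ρ : Set.Icc (0 : ℝ) 1, ⨆ θ : Set.Ici (0 : ℝ), gallagerExponent P W u c ρ θ

variable {P : X → ℝ} {W V u : X → Y → ℝ} {ρ θ : ℝ}

theorem condDivergence_add_max_eq_gallagerExponent [Nonempty Y] (hW : ∀ a y, 0 < W a y) {c : ℝ}
    (hρ : ρ ∈ Set.Icc (0 : ℝ) 1)
    (hmax : IsMaxOn (fun ρ ↦ gallagerExponent P W u c ρ θ) (Set.Icc 0 1) ρ) :
    condDivergence P (tiltedChannel W u ρ θ) W +
        max 0 (c - channelMean P (tiltedChannel W u ρ θ) (metricLoss u θ)) =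
      gallagerExponent P W u c ρ θ := by
  rw [max_zero_deriv_eq_mul_of_isMaxOn_Icc hmax
    (hasDerivAt_gallagerExponent_left u hW P c ρ θ) hρ, condDivergence_tiltedChannel u hW,
    gallagerExponent]
  ring

theorem scoreGain_convexComb (P : X → ℝ) (V u : X → Y → ℝ) (q Q : Y → X → ℝ) (δ : ℝ) :
    scoreGain P V u (fun y x' ↦ (1 - δ) * q y x' + δ * Q y x') =
      (1 - δ) * scoreGain P V u q + δ * scoreGain P V u Q := by
  simp only [scoreGain, ← channelMean_const_mul, ← channelMean_add, add_mul, sum_add_distrib,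
    mul_assoc, ← mul_sum]

variable [Nonempty X]

theorem gallagerExponent_le_abs (hP : ∀ a, 0 ≤ P a) (hW : ∀ a y, 0 ≤ W a y)
    (hW1 : ∀ a, ∑ y, W a y = 1) (u : X → Y → ℝ) (c : ℝ) (hρ : ρ ∈ Set.Icc (0 : ℝ) 1) (θ : ℝ) :
    gallagerExponent P W u c ρ θ ≤ |c| := by
  have hloss : 0 ≤ channelMean P W (metricLoss u θ) := sum_nonneg fun a _ ↦
    mul_nonneg (hP a) (sum_nonneg fun y _ ↦ mul_nonneg (hW a y) (metricLoss_nonneg u θ a y))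
  calc gallagerExponent P W u c ρ θ ≤ ρ * (c - channelMean P W (metricLoss u θ)) :=
        gallagerExponent_le u hP hW hW1 c ρ θ
    _ ≤ ρ * |c| := mul_le_mul_of_nonneg_left (by linarith [le_abs_self c]) hρ.1
    _ ≤ |c| := mul_le_of_le_one_left (abs_nonneg c) hρ.2

theorem gallagerExponent_le_optimalExponent (hP : ∀ a, 0 ≤ P a) (hW : ∀ a y, 0 ≤ W a y)
    (hW1 : ∀ a, ∑ y, W a y = 1) (u : X → Y → ℝ) (c : ℝ) (hρ : ρ ∈ Set.Icc (0 : ℝ) 1)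
    (hθ : 0 ≤ θ) : gallagerExponent P W u c ρ θ ≤ optimalExponent P W u c := by
  have hbound (ρ : Set.Icc (0 : ℝ) 1) (θ : Set.Ici (0 : ℝ)) :
      gallagerExponent P W u c ρ θ ≤ |c| := gallagerExponent_le_abs hP hW hW1 u c ρ.2 θ
  exact (le_ciSup ⟨|c|, Set.forall_mem_range.2 (hbound ⟨ρ, hρ⟩)⟩ (⟨θ, hθ⟩ : Set.Ici (0 : ℝ))).trans
    (le_ciSup (f := fun ρ : Set.Icc (0 : ℝ) 1 ↦
        ⨆ θ : Set.Ici (0 : ℝ), gallagerExponent P W u c ρ θ)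
      ⟨|c|, Set.forall_mem_range.2 fun ρ ↦ ciSup_le (hbound ρ)⟩ ⟨ρ, hρ⟩)

theorem exists_reverseChannel_scoreGain_pos (hP : ∀ a, 0 < P a) (hV : ∀ a y, 0 < V a y)
    {a a' : X} {y : Y} (hu : u a y < u a' y) :
    ∃ Q : Y → X → ℝ, (∀ y x', 0 ≤ Q y x') ∧ (∀ y, ∑ x', Q y x' = 1) ∧
      0 < scoreGain P V u Q := by
  classical
  choose best hbest using fun y ↦ Finite.exists_max fun x' ↦ u x' y
  have hsingle (y : Y) : 0 ≤ (Pi.single (best y) 1 : X → ℝ) := Pi.single_nonneg.2 zero_le_one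
  refine ⟨fun y ↦ Pi.single (best y) 1, hsingle, fun y ↦ by simp, ?_⟩
  have hgain (a : X) (y : Y) : ∑ x', (Pi.single (best y) 1 : X → ℝ) x' * (u x' y - u a y) =
      u (best y) y - u a y := by
    simp [Pi.single_apply]
  simp only [scoreGain, hgain]
  refine (mul_pos (hP a) (mul_pos (hV a y) (sub_pos.2 (hu.trans_le (hbest y a'))))).trans_le ?_
  exact mul_le_channelMean (fun a ↦ (hP a).le) (fun a y ↦ (hV a y).le)
    (fun a y ↦ sub_nonneg.2 (hbest y a)) a y

/-- Mixing a little of a gain-increasing reverse channel into `q` makes the gain strictly positive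
at an arbitrarily small cost in entropy. -/
theorem exists_reverseChannel_perturbation (hP : ∀ a, 0 < P a) (hV : ∀ a y, 0 < V a y)
    {q : Y → X → ℝ} (hq : ∀ y x', 0 < q y x') (hq1 : ∀ y, ∑ x', q y x' = 1)
    (hgain : 0 ≤ scoreGain P V u q) {h : ℝ} (hh : h < equivocation P V q) :
    ∃ Q : Y → X → ℝ, (∀ y x', 0 < Q y x') ∧ (∀ y, ∑ x', Q y x' = 1) ∧
      ((∀ a a' y, u a y ≤ u a' y) ∨ 0 < scoreGain P V u Q) ∧ h < equivocation P V Q := by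
  by_cases hu : ∀ a a' y, u a y ≤ u a' y
  · exact ⟨q, hq, hq1, .inl hu, hh⟩
  push Not at hu
  obtain ⟨a, a', y, hu⟩ := hu
  obtain ⟨Q, hQ, hQ1, hQgain⟩ := exists_reverseChannel_scoreGain_pos hP hV hu
  have hcont : Continuous fun δ : ℝ ↦
      equivocation P V fun y x' ↦ (1 - δ) * q y x' + δ * Q y x' := by
    unfold equivocation channelMean
    fun_prop
  have hnear : ∀ᶠ δ in 𝓝 (0 : ℝ),
      h < equivocation P V fun y x' ↦ (1 - δ) * q y x' + δ * Q y x' :=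
    continuousAt_const.eventually_lt hcont.continuousAt (by simpa using hh)
  obtain ⟨δ, ⟨hδh, hδ1⟩, hδ0⟩ := (((hnear.and (eventually_lt_nhds one_pos)).filter_mono
    nhdsWithin_le_nhds).and (eventually_mem_nhdsWithin (s := Set.Ioi (0 : ℝ)))).exists
  refine ⟨fun y x' ↦ (1 - δ) * q y x' + δ * Q y x', fun y x' ↦ ?_, fun y ↦ ?_, .inr ?_, hδh⟩
  · exact add_pos_of_pos_of_nonneg (mul_pos (sub_pos.2 hδ1) (hq y x')) (mul_nonneg hδ0.le (hQ y x'))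
  · rw [sum_add_distrib, ← mul_sum, ← mul_sum, hq1, hQ1]
    ring
  · rw [scoreGain_convexComb]
    exact add_pos_of_nonneg_of_pos (mul_nonneg (sub_pos.2 hδ1).le hgain) (mul_pos hδ0 hQgain)

theorem exists_channels_of_optimalExponent_lt [Nonempty Y] (hP : ∀ a, 0 < P a)
    (hW : ∀ a y, 0 < W a y) (hW1 : ∀ a, ∑ y, W a y = 1) {c e : ℝ}
    (he : optimalExponent P W u c < e) :
    ∃ (V : X → Y → ℝ) (Q : Y → X → ℝ) (d h : ℝ),
      (∀ a y, 0 < V a y) ∧ (∀ a, ∑ y, V a y = 1) ∧ (∀ y x', 0 < Q y x') ∧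
      (∀ y, ∑ x', Q y x' = 1) ∧ ((∀ a a' y, u a y ≤ u a' y) ∨ 0 < scoreGain P V u Q) ∧
      condDivergence P V W < d ∧ h < equivocation P V Q ∧ d + max 0 (c - h) < e := by
  obtain ⟨ρ, hρ, θ, hθ, hmax, hgain, hslack⟩ := exists_gallagerExponent_stationary u hW hP hW1 c
  set V := tiltedChannel W u ρ θ
  have hV (a : X) (y : Y) : 0 < V a y := tilt_pos (hW a) _ y
  have hvalue : condDivergence P V W + max 0 (c - equivocation P V (posterior u θ)) < e := by
    rw [equivocation_posterior, hslack, sub_zero,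
      condDivergence_add_max_eq_gallagerExponent hW hρ hmax]
    exact (gallagerExponent_le_optimalExponent (fun a ↦ (hP a).le) (fun a y ↦ (hW a y).le) hW1 u c
      hρ hθ).trans_lt he
  obtain ⟨ε, hε, hvalue⟩ : ∃ ε > 0,
      condDivergence P V W + ε + (max 0 (c - equivocation P V (posterior u θ)) + ε) < e :=
    ⟨(e - (condDivergence P V W + max 0 (c - equivocation P V (posterior u θ)))) / 3,
      by linarith, by linarith⟩
  obtain ⟨Q, hQ, hQ1, hu, hh⟩ := exists_reverseChannel_perturbation hP hV (posterior_pos u θ)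
    (sum_posterior u θ) hgain (sub_lt_self _ hε)
  refine ⟨V, Q, _, _, hV, fun a ↦ sum_tilt (hW a) _, hQ, hQ1, hu, lt_add_of_pos_right _ hε, hh,
    hvalue.trans_le' ?_⟩
  gcongr
  have := le_max_right 0 (c - equivocation P V (posterior u θ))
  exact max_le (by positivity) (by linarith)

end OptimalExponent

section Limit

open Finset Filter Topology

theorem exp_neg_mul_max_zero {t : ℝ} (ht : 0 ≤ t) (s : ℝ) :
    Real.exp (-(t * max 0 s)) = min 1 (Real.exp (-(t * s))) := by
  rw [mul_max_of_nonneg _ _ ht, ← min_neg_neg, mul_zero, neg_zero, Real.exp_monotone.map_min,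
    Real.exp_zero]

variable {X Y : Type*} [Fintype X] [Fintype Y] [Nonempty Y] {P : X → ℝ} {W : X → Y → ℝ}
  (hW : ∀ a y, 0 < W a y)
include hW

theorem rcuBound_pos (u : X → Y → ℝ) {K : ℝ} (hK : 0 < K) {n : ℕ} (x : Fin n → X) :
    0 < rcuBound W u K x := by
  refine sum_pos (fun y _ ↦ ?_) univ_nonempty
  have hcard : 0 < #(competitors u x y) := card_pos.2 ⟨x, mem_filter.2 ⟨mem_univ x, le_rfl⟩⟩
  have hprod : 0 < ∏ i, W (x i) (y i) := prod_pos fun i _ ↦ hW _ _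
  positivity

variable [Nonempty X] [DecidableEq X] {u : X → Y → ℝ} {x : ∀ n, Fin n → X} {c : ℝ} {cs p : ℕ → ℝ}

theorem eventually_lt_neg_log_div (hc : Tendsto cs atTop (𝓝 c)) (hp : ∀ᶠ n in atTop, 0 < p n)
    (hle : ∀ᶠ n in atTop, p n ≤ rcuBound W u (Real.exp (-(n * cs n))) (x n)) {b : ℝ}
    (hb : b < optimalExponent P W u c) :
    ∀ᶠ n in atTop, HasType P (x n) → b < -Real.log (p n) / n := by
  have : Nonempty (Set.Icc (0 : ℝ) 1) := ⟨⟨0, by simp⟩⟩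
  have : Nonempty (Set.Ici (0 : ℝ)) := ⟨⟨0, by simp⟩⟩
  obtain ⟨ρ, hρ⟩ := exists_lt_of_lt_ciSup hb
  obtain ⟨θ, hθ⟩ := exists_lt_of_lt_ciSup hρ
  have hlim : Tendsto (fun n ↦ gallagerExponent P W u (cs n) ρ θ) atTop
      (𝓝 (gallagerExponent P W u c ρ θ)) := (hc.const_mul _).sub_const _
  filter_upwards [hlim.eventually_const_lt hθ, hp, hle, eventually_gt_atTop 0]
    with n hbn hpn hlen hn hx
  refine hbn.trans_le ?_
  have hlog := Real.log_le_log hpn (hlen.trans (rcuBound_le u hW ρ.2 θ.2 (cs n) hx))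
  rw [Real.log_exp] at hlog
  rw [le_div_iff₀' (by positivity)]
  exact le_neg_of_le_neg hlog

theorem eventually_neg_log_div_lt (hP : ∀ a, 0 < P a) (hP1 : ∑ a, P a = 1)
    (hW1 : ∀ a, ∑ y, W a y = 1) (hc : Tendsto cs atTop (𝓝 c))
    (hle : ∀ᶠ n in atTop, rcuBound W u (Real.exp (-(n * cs n))) (x n) / 2 ≤ p n) {e : ℝ}
    (he : optimalExponent P W u c < e) :
    ∀ᶠ n in atTop, HasType P (x n) → -Real.log (p n) / n < e := by
  obtain ⟨V, Q, d, h, hV, hV1, hQ, hQ1, hu, hd, hh, hlt⟩ :=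
    exists_channels_of_optimalExponent_lt hP hW hW1 he
  have hlim : Tendsto (fun n : ℕ ↦ d + max 0 (cs n - h) + Real.log 4 / n) atTop
      (𝓝 (d + max 0 (c - h) + 0)) :=
    ((tendsto_const_nhds.max (hc.sub_const h)).const_add d).add
      (tendsto_const_div_atTop_nhds_zero_nat _)
  rw [add_zero] at hlim
  filter_upwards [hlim.eventually_lt_const hlt, hle, eventually_gt_atTop 0,
    eventually_half_exp_mul_min_le_rcuBound hP1 hW hV hV1 hQ hQ1 hu hd hh]
    with n hlt hlen hn hrcu hx
  have hmin : min 1 (Real.exp (-(n * cs n)) * Real.exp (n * h)) =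
      Real.exp (-(n * max 0 (cs n - h))) := by
    rw [exp_neg_mul_max_zero n.cast_nonneg, ← Real.exp_add]
    ring_nf
  have hp : Real.exp (-(n * (d + max 0 (cs n - h)) + Real.log 4)) ≤ p n := by
    have hbound := hrcu (x n) hx _ (Real.exp_pos (-(n * cs n))).le
    rw [hmin, ← Real.exp_add] at hbound
    rw [neg_add, Real.exp_add, Real.exp_neg (Real.log 4), Real.exp_log (by norm_num), mul_add,
      neg_add]
    linarith
  have hlog := (Real.le_log_iff_exp_le ((Real.exp_pos _).trans_le hp)).2 hp
  refine hlt.trans_le' ?_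
  have hn' : (0 : ℝ) < n := by positivity
  rw [div_le_iff₀' hn', mul_add, mul_div_cancel₀ _ hn'.ne']
  exact neg_le_of_neg_le hlog

theorem tendsto_neg_log_div_of_rcuBound (hP : ∀ a, 0 < P a) (hP1 : ∑ a, P a = 1)
    (hW1 : ∀ a, ∑ y, W a y = 1) (hc : Tendsto cs atTop (𝓝 c))
    (hp : ∀ᶠ n in atTop, p n ∈ Set.Icc (rcuBound W u (Real.exp (-(n * cs n))) (x n) / 2)
      (rcuBound W u (Real.exp (-(n * cs n))) (x n))) :
    Tendsto (fun n ↦ -Real.log (p n) / n) (atTop ⊓ 𝓟 {n | HasType P (x n)})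
      (𝓝 (optimalExponent P W u c)) := by
  refine tendsto_order.2 ⟨fun b hb ↦ eventually_inf_principal.2 ?_,
    fun e he ↦ eventually_inf_principal.2 ?_⟩
  · refine eventually_lt_neg_log_div hW hc (hp.mono fun n hn ↦ ?_) (hp.mono fun n hn ↦ hn.2) hb
    exact (half_pos (rcuBound_pos hW u (Real.exp_pos _) (x n))).trans_le hn.1
  · exact eventually_neg_log_div_lt hW hP hP1 hW1 hc (hp.mono fun n hn ↦ hn.1) he

end Limit

section Ensemble

open Finset Filter Topology

/-- The ensemble-average error probability of the random affine code with labelling `Φ`, given that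
the message `w` is encoded as `x`. -/
noncomputable def ensembleErrorProb {X Y m ι : Type*} [Fintype m] [Fintype Y] (W U : X → Y → ℝ)
    {n : ℕ} (Φ : (ι → ZMod 2) ≃ (Fin n → X)) (w : m → ZMod 2) (x : Fin n → X) : ℝ :=
  ∑ y : Fin n → Y, (∏ i, W (x i) (y i)) *
    affineCodeHitProb Φ w x fun x' ↦ ∏ i, U (x i) (y i) ≤ ∏ i, U (x' i) (y i)

variable {X Y : Type*} [Fintype X] {U : X → Y → ℝ}

theorem filter_prod_le_prod_eq_competitors (hU : ∀ a y, 0 < U a y) {n : ℕ}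
    (x : Fin n → X) (y : Fin n → Y) :
    ({x' | ∏ i, U (x i) (y i) ≤ ∏ i, U (x' i) (y i)} : Finset (Fin n → X)) =
      competitors (fun a y ↦ Real.log (U a y)) x y := by
  have hprod (x : Fin n → X) : 0 < ∏ i, U (x i) (y i) := prod_pos fun i _ ↦ hU _ _
  have hlog (x : Fin n → X) : Real.log (∏ i, U (x i) (y i)) = ∑ i, Real.log (U (x i) (y i)) :=
    Real.log_prod fun i _ ↦ (hU _ _).ne'
  refine filter_congr fun x' _ ↦ ?_
  rw [← Real.log_le_log_iff (hprod x) (hprod x'), hlog, hlog]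

theorem ensembleErrorProb_mem_Icc [Fintype Y] {m ι : Type*} [Fintype m] [Finite ι]
    {W : X → Y → ℝ} (hW : ∀ a y, 0 ≤ W a y) (hU : ∀ a y, 0 < U a y) {n : ℕ}
    (Φ : (ι → ZMod 2) ≃ (Fin n → X)) (w : m → ZMod 2) (x : Fin n → X) :
    ensembleErrorProb W U Φ w x ∈
      Set.Icc (rcuBound W (fun a y ↦ Real.log (U a y))
          ((2 ^ Fintype.card m - 1) / Fintype.card X ^ n) x / 2)
        (rcuBound W (fun a y ↦ Real.log (U a y))
          ((2 ^ Fintype.card m - 1) / Fintype.card X ^ n) x) := by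
  classical
  have hprod (y : Fin n → Y) : 0 ≤ ∏ i, W (x i) (y i) := prod_nonneg fun i _ ↦ hW _ _
  have hdens (y : Fin n → Y) : ((2 : ℝ) ^ Fintype.card m - 1) / Fintype.card X ^ n *
        #(competitors (fun a y ↦ Real.log (U a y)) x y) =
      (2 ^ Fintype.card m - 1) *
        ({x' | ∏ i, U (x i) (y i) ≤ ∏ i, U (x' i) (y i)} : Finset (Fin n → X)).dens := by
    rw [filter_prod_le_prod_eq_competitors hU, nnratCast_dens, Fintype.card_fun, Fintype.card_fin]
    push_cast
    ring
  simp only [ensembleErrorProb, rcuBound, hdens, sum_div, mul_div_assoc]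
  exact ⟨sum_le_sum fun y _ ↦ mul_le_mul_of_nonneg_left (half_min_le_affineCodeHitProb Φ w x _)
      (hprod y),
    sum_le_sum fun y _ ↦ mul_le_mul_of_nonneg_left (affineCodeHitProb_le Φ w x _) (hprod y)⟩

theorem two_pow_sub_one_div_eq_exp {N n k : ℕ} (hN : N ≠ 0) (hn : n ≠ 0) (hk : k ≠ 0) :
    ((2 : ℝ) ^ k - 1) / N ^ n =
      Real.exp (-(n * (Real.log N - Real.log (2 ^ k - 1) / n))) := by
  have hk' : (0 : ℝ) < 2 ^ k - 1 := sub_pos.2 (one_lt_pow₀ one_lt_two hk)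
  have hN' : (0 : ℝ) < N := by positivity
  rw [mul_sub, mul_div_cancel₀ _ (Nat.cast_ne_zero.2 hn), neg_sub, Real.exp_sub,
    Real.exp_log hk', Real.exp_nat_mul, Real.exp_log hN']

theorem tendsto_log_two_pow_sub_one_div {k : ℕ → ℕ} {r : ℝ} (hk0 : ∀ᶠ n in atTop, k n ≠ 0)
    (hk : Tendsto (fun n ↦ k n * Real.log 2 / n) atTop (𝓝 r)) :
    Tendsto (fun n : ℕ ↦ Real.log (2 ^ k n - 1) / n) atTop (𝓝 r) := by
  have hlower : Tendsto (fun n ↦ k n * Real.log 2 / n - Real.log 2 / n) atTop (𝓝 (r - 0)) :=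
    hk.sub (tendsto_const_div_atTop_nhds_zero_nat _)
  rw [sub_zero] at hlower
  refine tendsto_of_tendsto_of_tendsto_of_le_of_le' hlower hk ?_ ?_
  · filter_upwards [hk0] with n hn
    have htwo : (2 : ℝ) ≤ 2 ^ k n := le_self_pow₀ one_le_two hn
    rw [← sub_div, ← Real.log_pow, ← Real.log_div (by positivity) two_ne_zero]
    gcongr
    linarith
  · filter_upwards [hk0] with n hn
    have hone : (1 : ℝ) < 2 ^ k n := one_lt_pow₀ one_lt_two hn
    rw [← Real.log_pow]
    gcongr
    linarith

theorem tendsto_mul_log_two_div {N : ℕ} (hN : 1 < N) {k L : ℕ → ℕ} {r : ℝ}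
    (hL : ∀ n, 2 ^ L n = N ^ n) (hk : Tendsto (fun n ↦ (k n : ℝ) / L n) atTop (𝓝 r)) :
    Tendsto (fun n ↦ k n * Real.log 2 / n) atTop (𝓝 (r * Real.log N)) := by
  refine (hk.mul_const (Real.log N)).congr' ?_
  filter_upwards [eventually_ne_atTop 0] with n hn
  have hlog : L n * Real.log 2 = n * Real.log N := by
    rw [← Real.log_pow, ← Real.log_pow]
    exact_mod_cast congrArg (fun j : ℕ ↦ Real.log j) (hL n)
  have hL0 : L n ≠ 0 := fun h ↦ (one_lt_pow₀ hN hn).ne (by rw [← hL, h, pow_zero])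
  field_simp
  linear_combination k n * -hlog

theorem rpow_eq_exp_mul_log {θ t : ℝ} (ht : 0 < t) : t ^ θ = Real.exp (θ * Real.log t) := by
  rw [Real.rpow_def_of_pos ht, mul_comm]

theorem Utheta_eq_posterior (hU : ∀ a y, 0 < U a y) (θ : ℝ) (a : X) (y : Y) :
    Utheta U θ a y = posterior (fun a y ↦ Real.log (U a y)) θ y a := by
  simp only [Utheta, posterior, tilt, one_mul, rpow_eq_exp_mul_log (hU _ _)]

variable [Nonempty X] [Fintype Y]

theorem logb_exponent_eq_gallagerExponent_div (hU : ∀ a y, 0 < U a y) (P : X → ℝ) (W : X → Y → ℝ)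
    (b ρ θ : ℝ) :
    -∑ a, P a * Real.logb 2 (∑ y, W a y / Utheta U θ a y ^ ρ) + ρ * b =
      gallagerExponent P W (fun a y ↦ Real.log (U a y)) (b * Real.log 2) ρ θ / Real.log 2 := by
  have hsummand (a : X) (y : Y) : W a y / Utheta U θ a y ^ ρ =
      W a y * Real.exp (ρ * metricLoss (fun a y ↦ Real.log (U a y)) θ a y) := by
    rw [Utheta_eq_posterior hU, rpow_eq_exp_mul_log (posterior_pos _ _ _ _), log_posterior,
      div_eq_mul_inv, ← Real.exp_neg, mul_neg, neg_neg]
  have hlog : Real.log 2 ≠ 0 := (Real.log_pos one_lt_two).ne'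
  simp only [hsummand, Real.logb, mul_div_assoc', ← sum_div, gallagerExponent, logPartition]
  field_simp
  ring

theorem iSup_logb_exponent_eq_optimalExponent_div (hU : ∀ a y, 0 < U a y) (P : X → ℝ)
    (W : X → Y → ℝ) (b : ℝ) :
    ⨆ ρ : Set.Icc (0 : ℝ) 1, ⨆ θ : Set.Ici (0 : ℝ),
        (-∑ a, P a * Real.logb 2 (∑ y, W a y / Utheta U θ a y ^ (ρ : ℝ)) + ρ * b) =
      optimalExponent P W (fun a y ↦ Real.log (U a y)) (b * Real.log 2) / Real.log 2 := by
  have hlog : 0 ≤ (Real.log 2)⁻¹ := inv_nonneg.2 (Real.log_nonneg one_le_two)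
  simp only [logb_exponent_eq_gallagerExponent_div hU, optimalExponent]
  simp only [div_eq_mul_inv, Real.iSup_mul_of_nonneg hlog]

end Ensemble

open Filter Topology in
theorem error_exponent_of_mismatched_linear_code_general
    {X Y : Type*} [Fintype X] [Fintype Y] [Nontrivial X] [Nonempty Y] [DecidableEq X]
    {P : X → ℝ} (hP : ∀ a, 0 < P a) (hP1 : ∑ a, P a = 1)
    {W : X → Y → ℝ} (hW : ∀ a y, 0 < W a y) (hW1 : ∀ a, ∑ y, W a y = 1)
    {U : X → Y → ℝ} (hU : ∀ a y, 0 < U a y)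
    {ι : ℕ → Type*} [∀ n, Fintype (ι n)] (Φ : ∀ n, (ι n → ZMod 2) ≃ (Fin n → X))
    {k : ℕ → ℕ} (hk0 : ∀ᶠ n in atTop, k n ≠ 0) {r : ℝ}
    (hk : Tendsto (fun n ↦ (k n : ℝ) / Fintype.card (ι n)) atTop (𝓝 r))
    (w : ∀ n, Fin (k n) → ZMod 2) (x : ∀ n, Fin n → X) :
    Tendsto (fun n : ℕ ↦ -(1 / (n : ℝ)) * Real.logb 2 (ensembleErrorProb W U (Φ n) (w n) (x n)))
      (atTop ⊓ 𝓟 {n | HasType P (x n)})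
      (𝓝 (⨆ ρ : Set.Icc (0 : ℝ) 1, ⨆ θ : Set.Ici (0 : ℝ),
        (-∑ a, P a * Real.logb 2 (∑ y, W a y / Utheta U θ a y ^ (ρ : ℝ)) +
          ρ * (Real.logb 2 (Fintype.card X) * (1 - r))))) := by
  classical
  have hcard (n : ℕ) : 2 ^ Fintype.card (ι n) = Fintype.card X ^ n := by
    simpa using Fintype.card_congr (Φ n)
  have hrate := (tendsto_log_two_pow_sub_one_div hk0 <|
    tendsto_mul_log_two_div Fintype.one_lt_card hcard hk).const_sub (Real.log (Fintype.card X))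
  have hlimit := tendsto_neg_log_div_of_rcuBound (x := x) hW hP hP1 hW1 hrate <| by
    filter_upwards [hk0, eventually_ne_atTop 0] with n hkn hn
    rw [← two_pow_sub_one_div_eq_exp Fintype.card_ne_zero hn hkn]
    simpa using ensembleErrorProb_mem_Icc (fun a y ↦ (hW a y).le) hU (Φ n) (w n) (x n)
  rw [iSup_logb_exponent_eq_optimalExponent_div hU]
  convert hlimit.div_const (Real.log 2) using 2 with n
  · rw [Real.logb]
    ring
  · rw [Real.logb, mul_right_comm, div_mul_cancel₀ _ (Real.log_pos one_lt_two).ne']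
    ring_nf

/-- The random coding error exponent of the ensemble of random (affine)
linear codes over GF(2), where the encoder transmits a fixed codeword of constant
composition `P_X` and the decoder uses the additive metric `U` over the *whole* linear
code, equals
`E_r(R,U) = max_{ρ∈[0,1]} sup_{θ≥0} { −Σ_x P_X(x) log₂( Σ_y W(y|x)/U_θ(x|y)^ρ )
+ ρ(H(P_X) − R) }`, with `R = H(P_X) − m(1 − r_fec)`.
The limit is taken along blocklengths `n` for which `n·P_X` is integral and the
transmitted codeword `xseq n` has exact type `P_X`. -/
theorem error_exponent_of_mismatched_linear_code
    {X Y : Type*} [Fintype X] [Fintype Y] [Nonempty X] [Nonempty Y] [DecidableEq X]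
    (m : ℕ) (hm : 0 < m) (hcard : Fintype.card X = 2 ^ m)
    (φ : (Fin m → ZMod 2) → X) (hφ : Function.Bijective φ)
    (P : X → ℝ) (hP0 : ∀ x, 0 < P x) (hP1 : ∑ x, P x = 1)
    (hPrat : ∀ x, ∃ q : ℚ, (q : ℝ) = P x)
    (W : X → Y → ℝ) (hW : ∀ x y, 0 < W x y) (hWsum : ∀ x, ∑ y, W x y = 1)
    (U : X → Y → ℝ) (hU : ∀ x y, 0 < U x y)
    (rfec : ℝ) (hrfec : rfec ∈ Set.Ioc (0:ℝ) 1)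
    (R : ℝ) (hR : R = entropy2 P - m * (1 - rfec))
    (k : ℕ → ℕ)
    (hk : Filter.Tendsto (fun n : ℕ => (k n : ℝ) / (n * m)) Filter.atTop (nhds rfec))
    (xseq : ∀ n : ℕ, Fin n → X)
    (wseq : ∀ n : ℕ, Fin (k n) → ZMod 2)
    (S : Set ℕ)
    (hS : S = {n : ℕ | ∀ a : X,
      (((Finset.univ.filter fun i : Fin n => xseq n i = a).card : ℝ)) = n * P a})
    (Pe : ℕ → ℝ)
    (hPe : ∀ n : ℕ, Pe n =
      ∑ y : Fin n → Y,
        (∏ i, W (xseq n i) (y i)) *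
          ((Nat.card {ω : Matrix (Fin (k n)) (Fin n × Fin m) (ZMod 2) ×
                ((Fin n × Fin m) → ZMod 2) //
              (∃ w', w' ≠ wseq n ∧
                (∏ i, U (xseq n i) (y i)) ≤
                  ∏ i, U (φ fun j => (Matrix.vecMul w' ω.1 + ω.2) (i, j)) (y i)) ∧
              (fun i : Fin n => φ fun j => (Matrix.vecMul (wseq n) ω.1 + ω.2) (i, j)) =
                xseq n} : ℝ) /
            (Nat.card {ω : Matrix (Fin (k n)) (Fin n × Fin m) (ZMod 2) ×
                ((Fin n × Fin m) → ZMod 2) //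
              (fun i : Fin n => φ fun j => (Matrix.vecMul (wseq n) ω.1 + ω.2) (i, j)) =
                xseq n} : ℝ))) :
    Filter.Tendsto (fun n : ℕ => -(1 / (n : ℝ)) * Real.logb 2 (Pe n))
      (Filter.atTop ⊓ Filter.principal S)
      (nhds (⨆ ρ : Set.Icc (0:ℝ) 1, ⨆ θ : Set.Ici (0:ℝ),
        (-∑ x, P x * Real.logb 2 (∑ y, W x y / Utheta U θ.1 x y ^ (ρ.1 : ℝ))
          + ρ.1 * (entropy2 P - R)))) := by
  obtain rfl : Pe = _ := funext hPe
  subst hS hR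
  have : Nontrivial X := Fintype.one_lt_card_iff_nontrivial.1 (hcard ▸ Nat.one_lt_two_pow hm.ne')
  have hk0 : ∀ᶠ n in Filter.atTop, k n ≠ 0 := by
    filter_upwards [hk.eventually_const_lt hrfec.1] with n hn h
    simp [h] at hn
  have hbij (n : ℕ) : Function.Bijective
      fun (z : Fin n × Fin m → ZMod 2) (i : Fin n) ↦ φ fun j ↦ z (i, j) :=
    (hφ.comp_left (α := Fin n)).comp (Equiv.curry _ _ _).bijective
  have hrate : entropy2 P - (entropy2 P - m * (1 - rfec)) =
      Real.logb 2 (Fintype.card X) * (1 - rfec) := by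
    rw [sub_sub_cancel, hcard, Nat.cast_pow, Real.logb_pow, Nat.cast_two,
      Real.logb_self_eq_one one_lt_two, mul_one]
  rw [hrate]
  exact error_exponent_of_mismatched_linear_code_general hP0 hP1 hW hWsum hU
    (fun n ↦ Equiv.ofBijective _ (hbij n)) hk0 (by simpa using hk) wseq xseq
end

section
/- Let X and Y be finite nonempty alphabets, P_X a probability mass function on X, and W a channel with W(y|x) > 0 for all x, y and Σ_y W(y|x) = 1 for each x. Let U : X×Y → (0,∞) and for θ ≥ 0 set U_θ(x|y) = U(x,y)^θ / Σ_{x'} U(x',y)^θ. Then for every R ∈ ℝ, max_{ρ∈[0,1]} sup_{θ≥0} { −Σ_x P_X(x) log₂( Σ_y W(y|x) / U_θ(x|y)^ρ ) + ρ(H(P_X) − R) } ≤ min over channels Q (Q(y|x) ≥ 0, Σ_y Q(y|x) = 1) of { D(Q‖W|P_X) + [ I_Q(X;Y) − R ]_+ }. -/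
/-- Weighted conditional divergence `D(Q‖W|P_X)` (base-2 logarithm). -/
noncomputable def condDiv2 {X Y : Type*} [Fintype X] [Fintype Y]
    (P : X → ℝ) (Q W : X → Y → ℝ) : ℝ :=
  ∑ x, P x * ∑ y, Q x y * Real.logb 2 (Q x y / W x y)

/-- Mutual information `I_Q(X;Y)` of the joint distribution `P_X(x) Q(y|x)` (base 2). -/
noncomputable def mutInfo2 {X Y : Type*} [Fintype X] [Fintype Y]
    (P : X → ℝ) (Q : X → Y → ℝ) : ℝ :=
  ∑ x, ∑ y, P x * Q x y * Real.logb 2 (Q x y / ∑ x', P x' * Q x' y)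

/-!
Fix a channel `Q` and put `V = U_θ`, which for each `y` is a probability vector in `x`. A change of
measure from `W` to `Q` (Gibbs' inequality on `Y`) bounds `−Σ_x P(x) log₂ Σ_y W(y|x) / V(x|y)^ρ` by
`D(Q‖W|P) − ρ H(V)`, where `H(V) = −𝔼_{PQ} log₂ V(X|Y)`. Gibbs' inequality on `X × Y`, comparing
`P(x) Q(y|x)` with `V(x|y) Σ_{x'} P(x') Q(y|x')`, gives `H(P) − H(V) ≤ I_Q(X;Y)`.
Adding `ρ` times the second bound to the first leaves `D(Q‖W|P) + ρ (I_Q(X;Y) − R)`, and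
`ρ t ≤ [t]₊` for `ρ ∈ [0,1]`.
-/

section Gibbs

variable {ι : Type*} {s : Finset ι} {b : ℝ} {p a : ι → ℝ}

/-- The log sum inequality: Jensen's inequality for `t ↦ t log t` at the points `p i / a i` with
weights `a i / ∑ a`. -/
theorem sum_mul_log_sum_div_sum_le (hp : ∀ i ∈ s, 0 ≤ p i) (ha : ∀ i ∈ s, 0 ≤ a i)
    (hpa : ∀ i ∈ s, a i = 0 → p i = 0) :
    (∑ i ∈ s, p i) * Real.log ((∑ i ∈ s, p i) / ∑ i ∈ s, a i) ≤
      ∑ i ∈ s, p i * Real.log (p i / a i) := by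
  set A := ∑ i ∈ s, a i
  rcases (Finset.sum_nonneg ha).eq_or_lt' with hA0 | hA0
  · have hp_zero : ∀ i ∈ s, p i = 0 := fun i hi =>
      hpa i hi ((Finset.sum_eq_zero_iff_of_nonneg ha).1 hA0 i hi)
    rw [Finset.sum_eq_zero hp_zero, zero_mul]
    exact (Finset.sum_eq_zero fun i hi => by rw [hp_zero i hi, zero_mul]).ge
  · have weight_mul_point : ∀ i ∈ s, a i / A * (p i / a i) = p i / A := fun i hi => by
      rcases eq_or_ne (a i) 0 with h | h
      · simp [h, hpa i hi h]
      · field_simp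
    have jensen := Real.convexOn_mul_log.map_sum_le (t := s) (w := fun i => a i / A)
      (p := fun i => p i / a i) (fun i hi => div_nonneg (ha i hi) hA0.le)
      (by rw [← Finset.sum_div, div_self hA0.ne'])
      (fun i hi => div_nonneg (hp i hi) (ha i hi))
    simp only [smul_eq_mul, ← mul_assoc] at jensen
    rw [Finset.sum_congr rfl weight_mul_point, ← Finset.sum_div, Finset.sum_congr rfl fun i hi =>
      congrArg (· * Real.log (p i / a i)) (weight_mul_point i hi)] at jensen
    simp only [div_mul_eq_mul_div, ← Finset.sum_div] at jensen
    exact (div_le_div_iff_of_pos_right hA0).1 jensen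

theorem sum_mul_logb_sum_div_sum_le (hb : 1 < b) (hp : ∀ i ∈ s, 0 ≤ p i) (ha : ∀ i ∈ s, 0 ≤ a i)
    (hpa : ∀ i ∈ s, a i = 0 → p i = 0) :
    (∑ i ∈ s, p i) * Real.logb b ((∑ i ∈ s, p i) / ∑ i ∈ s, a i) ≤
      ∑ i ∈ s, p i * Real.logb b (p i / a i) := by
  simp only [Real.logb, ← mul_div_assoc, ← Finset.sum_div]
  exact div_le_div_of_nonneg_right (sum_mul_log_sum_div_sum_le hp ha hpa) (Real.log_pos hb).le

theorem sum_mul_logb_div_nonneg (hb : 1 < b) (hp : ∀ i ∈ s, 0 ≤ p i) (ha : ∀ i ∈ s, 0 ≤ a i)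
    (hpa : ∀ i ∈ s, a i = 0 → p i = 0) (hle : ∑ i ∈ s, a i ≤ ∑ i ∈ s, p i) :
    0 ≤ ∑ i ∈ s, p i * Real.logb b (p i / a i) := by
  refine le_trans ?_ (sum_mul_logb_sum_div_sum_le hb hp ha hpa)
  rcases (Finset.sum_nonneg ha).eq_or_lt' with h | h
  · simp [h]
  · exact mul_nonneg (Finset.sum_nonneg hp) (Real.logb_nonneg hb ((one_le_div h).2 hle))

theorem neg_logb_sum_le_sum_mul_logb_div (hb : 1 < b) (hp : ∀ i ∈ s, 0 ≤ p i)
    (ha : ∀ i ∈ s, 0 ≤ a i) (hpa : ∀ i ∈ s, a i = 0 → p i = 0) (hp1 : ∑ i ∈ s, p i = 1) :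
    -Real.logb b (∑ i ∈ s, a i) ≤ ∑ i ∈ s, p i * Real.logb b (p i / a i) := by
  simpa [hp1, Real.logb_inv] using sum_mul_logb_sum_div_sum_le hb hp ha hpa

end Gibbs

theorem mul_logb_div_div_rpow {b q w v : ℝ} (hw : w ≠ 0) (hv : 0 < v) (ρ : ℝ) :
    q * Real.logb b (q / (w / v ^ ρ)) = q * Real.logb b (q / w) + ρ * (q * Real.logb b v) := by
  rcases eq_or_ne q 0 with rfl | hq
  · simp
  · rw [div_div_eq_mul_div, mul_div_right_comm,
      Real.logb_mul (div_ne_zero hq hw) (Real.rpow_pos_of_pos hv ρ).ne',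
      Real.logb_rpow_eq_mul_logb_of_pos hv]
    ring

theorem mul_logb_mul_div_mul {b p k q v : ℝ} (hq : q = 0 → p * k = 0) (hv : v ≠ 0) :
    p * k * Real.logb b (p * k / (q * v)) =
      p * k * Real.logb b (k / q) + p * k * Real.logb b p - p * k * Real.logb b v := by
  rcases eq_or_ne (p * k) 0 with hpk | hpk
  · simp [hpk]
  · have hq' : q ≠ 0 := fun h => hpk (hq h)
    have hp : p ≠ 0 := left_ne_zero_of_mul hpk
    have hk : k ≠ 0 := right_ne_zero_of_mul hpk
    rw [Real.logb_div hpk (mul_ne_zero hq' hv), Real.logb_mul hp hk, Real.logb_mul hq' hv,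
      Real.logb_div hk hq']
    ring

section Channel

variable {X Y : Type*} [Fintype X]

theorem Utheta_pos {U : X → Y → ℝ} (hU : ∀ x y, 0 < U x y) (θ : ℝ) (x : X) (y : Y) :
    0 < Utheta U θ x y :=
  have hpow : ∀ x, 0 < U x y ^ θ := fun x => Real.rpow_pos_of_pos (hU x y) θ
  div_pos (hpow x) (Finset.sum_pos (fun x' _ => hpow x') ⟨x, Finset.mem_univ x⟩)

theorem sum_Utheta_le_one (U : X → Y → ℝ) (θ : ℝ) (y : Y) : ∑ x, Utheta U θ x y ≤ 1 := by
  simpa only [Utheta, ← Finset.sum_div] using div_self_le_one (∑ x, U x y ^ θ)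

variable [Fintype Y]

/-- The conditional cross entropy `−Σ_{x,y} P(x) Q(y|x) log₂ V(x|y)` of a backward channel `V`
relative to the joint distribution `P(x) Q(y|x)`. Like `Utheta`, the backward channel takes its
output `x` as first argument. -/
noncomputable def condCrossEntropy2 (P : X → ℝ) (Q V : X → Y → ℝ) : ℝ :=
  -∑ x, P x * ∑ y, Q x y * Real.logb 2 (V x y)

variable {P : X → ℝ} {Q W V : X → Y → ℝ}

theorem entropy2_eq_neg_sum_sum (hQ1 : ∀ x, ∑ y, Q x y = 1) :
    entropy2 P = -∑ x, ∑ y, P x * Q x y * Real.logb 2 (P x) := by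
  simp only [entropy2, ← Finset.sum_mul, ← Finset.mul_sum, hQ1, mul_one]

theorem sum_joint_mul_logb_div_eq (hP0 : ∀ x, 0 ≤ P x) (hQ0 : ∀ x y, 0 ≤ Q x y)
    (hQ1 : ∀ x, ∑ y, Q x y = 1) (hV : ∀ x y, V x y ≠ 0) :
    ∑ x, ∑ y, P x * Q x y * Real.logb 2 (P x * Q x y / ((∑ x', P x' * Q x' y) * V x y)) =
      mutInfo2 P Q - entropy2 P + condCrossEntropy2 P Q V := by
  have marginal_eq_zero : ∀ x y, ∑ x', P x' * Q x' y = 0 → P x * Q x y = 0 := fun x y h =>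
    (Finset.sum_eq_zero_iff_of_nonneg fun x' _ => mul_nonneg (hP0 x') (hQ0 x' y)).1 h x
      (Finset.mem_univ x)
  simp only [fun x y => mul_logb_mul_div_mul (b := 2) (marginal_eq_zero x y) (hV x y),
    Finset.sum_sub_distrib, Finset.sum_add_distrib]
  rw [entropy2_eq_neg_sum_sum hQ1]
  simp only [mutInfo2, condCrossEntropy2, Finset.mul_sum, mul_assoc]
  ring

theorem entropy2_sub_condCrossEntropy2_le_mutInfo2 (hP0 : ∀ x, 0 ≤ P x) (hQ0 : ∀ x y, 0 ≤ Q x y)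
    (hQ1 : ∀ x, ∑ y, Q x y = 1) (hV : ∀ x y, 0 < V x y) (hV1 : ∀ y, ∑ x, V x y ≤ 1) :
    entropy2 P - condCrossEntropy2 P Q V ≤ mutInfo2 P Q := by
  have joint_nonneg : ∀ x y, 0 ≤ P x * Q x y := fun x y => mul_nonneg (hP0 x) (hQ0 x y)
  have marginal_nonneg : ∀ y, 0 ≤ ∑ x, P x * Q x y := fun y =>
    Finset.sum_nonneg fun x _ => joint_nonneg x y
  have mass_le : ∑ z : X × Y, (∑ x, P x * Q x z.2) * V z.1 z.2 ≤
      ∑ z : X × Y, P z.1 * Q z.1 z.2 := by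
    simp only [Fintype.sum_prod_type_right, ← Finset.mul_sum]
    exact Finset.sum_le_sum fun y _ => mul_le_of_le_one_right (marginal_nonneg y) (hV1 y)
  have gibbs := sum_mul_logb_div_nonneg (b := 2) one_lt_two
    (fun (z : X × Y) _ => joint_nonneg z.1 z.2)
    (fun z _ => mul_nonneg (marginal_nonneg z.2) (hV z.1 z.2).le)
    (fun z _ h => (Finset.sum_eq_zero_iff_of_nonneg fun x _ => joint_nonneg x z.2).1
      ((mul_eq_zero_iff_right (hV z.1 z.2).ne').1 h) z.1 (Finset.mem_univ _)) mass_le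
  rw [Fintype.sum_prod_type, sum_joint_mul_logb_div_eq hP0 hQ0 hQ1 fun x y => (hV x y).ne'] at gibbs
  linarith

theorem neg_sum_mul_logb_sum_div_rpow_le (hP0 : ∀ x, 0 ≤ P x) (hW : ∀ x y, 0 < W x y)
    (hQ0 : ∀ x y, 0 ≤ Q x y) (hQ1 : ∀ x, ∑ y, Q x y = 1) (hV : ∀ x y, 0 < V x y) (ρ : ℝ) :
    -∑ x, P x * Real.logb 2 (∑ y, W x y / V x y ^ ρ) ≤
      condDiv2 P Q W - ρ * condCrossEntropy2 P Q V := by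
  have hpos : ∀ x y, 0 < W x y / V x y ^ ρ := fun x y =>
    div_pos (hW x y) (Real.rpow_pos_of_pos (hV x y) ρ)
  have change_of_measure : ∀ x, -Real.logb 2 (∑ y, W x y / V x y ^ ρ) ≤
      ∑ y, Q x y * Real.logb 2 (Q x y / W x y) + ρ * ∑ y, Q x y * Real.logb 2 (V x y) := by
    intro x
    have gibbs := neg_logb_sum_le_sum_mul_logb_div (b := 2) one_lt_two (fun y _ => hQ0 x y)
      (fun y _ => (hpos x y).le) (fun y _ h => absurd h (hpos x y).ne') (hQ1 x)
    simpa only [fun y => mul_logb_div_div_rpow (b := 2) (q := Q x y) (hW x y).ne' (hV x y) ρ,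
      Finset.sum_add_distrib, ← Finset.mul_sum] using gibbs
  calc -∑ x, P x * Real.logb 2 (∑ y, W x y / V x y ^ ρ)
      = ∑ x, P x * -Real.logb 2 (∑ y, W x y / V x y ^ ρ) := by
        simp only [mul_neg, Finset.sum_neg_distrib]
    _ ≤ ∑ x, P x * (∑ y, Q x y * Real.logb 2 (Q x y / W x y) +
          ρ * ∑ y, Q x y * Real.logb 2 (V x y)) :=
        Finset.sum_le_sum fun x _ => mul_le_mul_of_nonneg_left (change_of_measure x) (hP0 x)
    _ = condDiv2 P Q W - ρ * condCrossEntropy2 P Q V := by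
        simp only [condDiv2, condCrossEntropy2, mul_add, Finset.sum_add_distrib,
          mul_left_comm (P _) ρ, ← Finset.mul_sum]
        ring

theorem exponent_upper_bounded_by_cc_exponent_general (hP0 : ∀ x, 0 ≤ P x)
    (hW : ∀ x y, 0 < W x y) (hQ0 : ∀ x y, 0 ≤ Q x y) (hQ1 : ∀ x, ∑ y, Q x y = 1)
    (hV : ∀ x y, 0 < V x y) (hV1 : ∀ y, ∑ x, V x y ≤ 1) {ρ : ℝ} (hρ : ρ ∈ Set.Icc 0 1) (R : ℝ) :
    -∑ x, P x * Real.logb 2 (∑ y, W x y / V x y ^ ρ) + ρ * (entropy2 P - R) ≤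
      condDiv2 P Q W + max (mutInfo2 P Q - R) 0 := by
  calc -∑ x, P x * Real.logb 2 (∑ y, W x y / V x y ^ ρ) + ρ * (entropy2 P - R)
      ≤ condDiv2 P Q W - ρ * condCrossEntropy2 P Q V + ρ * (entropy2 P - R) := by
        gcongr
        exact neg_sum_mul_logb_sum_div_rpow_le hP0 hW hQ0 hQ1 hV ρ
    _ = condDiv2 P Q W + ρ * (entropy2 P - condCrossEntropy2 P Q V - R) := by ring
    _ ≤ condDiv2 P Q W + ρ * max (mutInfo2 P Q - R) 0 := by
        have hI := entropy2_sub_condCrossEntropy2_le_mutInfo2 hP0 hQ0 hQ1 hV hV1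
        gcongr
        · exact hρ.1
        · exact le_max_of_le_left (sub_le_sub_right hI R)
    _ ≤ condDiv2 P Q W + max (mutInfo2 P Q - R) 0 := by
        gcongr
        exact mul_le_of_le_one_left (le_max_right _ _) hρ.2

end Channel

/-- For any additive decoding metric `U`, the exponent
`max_{ρ∈[0,1]} sup_{θ≥0} { −Σ_x P_X(x) log₂( Σ_y W(y|x)/U_θ(x|y)^ρ ) + ρ(H(P_X) − R) }`
is at most the constant-composition random coding exponent
`min_Q { D(Q‖W|P_X) + [I_Q(X;Y) − R]_+ }`. -/
theorem exponent_upper_bounded_by_cc_exponent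
    {X Y : Type*} [Fintype X] [Fintype Y] [Nonempty X] [Nonempty Y]
    (P : X → ℝ) (hP0 : ∀ x, 0 ≤ P x) (hP1 : ∑ x, P x = 1)
    (W : X → Y → ℝ) (hW : ∀ x y, 0 < W x y) (hWsum : ∀ x, ∑ y, W x y = 1)
    (U : X → Y → ℝ) (hU : ∀ x y, 0 < U x y) (R : ℝ) :
    (⨆ ρ : Set.Icc (0:ℝ) 1, ⨆ θ : Set.Ici (0:ℝ),
        (-∑ x, P x * Real.logb 2 (∑ y, W x y / Utheta U θ.1 x y ^ (ρ.1 : ℝ))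
          + ρ.1 * (entropy2 P - R))) ≤
      ⨅ Q : {Q : X → Y → ℝ // (∀ x y, 0 ≤ Q x y) ∧ ∀ x, ∑ y, Q x y = 1},
        condDiv2 P Q.1 W + max (mutInfo2 P Q.1 - R) 0 := by
  have : Nonempty {Q : X → Y → ℝ // (∀ x y, 0 ≤ Q x y) ∧ ∀ x, ∑ y, Q x y = 1} :=
    ⟨⟨W, fun x y => (hW x y).le, hWsum⟩⟩
  have : Nonempty (Set.Icc (0:ℝ) 1) := Set.nonempty_Icc_subtype zero_le_one
  exact le_ciInf fun Q => ciSup_le fun ρ => ciSup_le fun θ =>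
    exponent_upper_bounded_by_cc_exponent_general hP0 hW Q.2.1 Q.2.2 (Utheta_pos hU θ)
      (sum_Utheta_le_one U θ) ρ.2 R
end
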